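/- arXiv:1403.4231 — 2 statements merged into one kernel-verified Lean document; each statement's English description precedes it below -/
import Mathlib

section
/- Let ω^{ij} be a smooth antisymmetric bivector and Γ^i_{jk} smooth Christoffel symbols on an open set U ⊆ ℝⁿ such that the pair (ω, ∇) is Poisson-compatible. Define H^{ij} := (1/4) ω^{is}(T^j_{nm;s} − 2 R^j_{nms}) dx^m ∧ dx^n, and over ℝ[λ]/(λ²) define for homogeneous forms ξ ∧₁ η := ξ ∧ η + (λ/2) ω^{ij} ∇_i ξ ∧ ∇_j η + λ (−1)^{|ξ|+1} H^{ij} ∧ (∂_i⌟ξ) ∧ (∂_j⌟η), extended λ-bilinearly. Then (Ω(U) ⊗ ℝ[λ]/(λ²), ∧₁, d) is a differential graded algebra: ∧₁ is associative, and d(ξ ∧₁ η) = dξ ∧₁ η + (−1)^{|ξ|} ξ ∧₁ dη for all homogeneous ξ and all η, where d is the undeformed exterior derivative. -/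
namespace Stmt12

variable {n : ℕ}

/-- A point of the coordinate chart. -/
abbrev Pt (n : ℕ) := Fin n → ℝ

/-- The coefficient family of a differential form: a `p`-form is a family
`ξ_{a 0, …, a (p−1)}` of functions (only the first `p` index slots are used). -/
abbrev Form (n : ℕ) := (ℕ → Fin n) → Pt n → ℝ

/-- Partial derivative in the `i`-th coordinate direction. -/
noncomputable def pd (i : Fin n) (f : Pt n → ℝ) (x : Pt n) : ℝ :=
  fderiv ℝ f x (Pi.single i 1)

/-- Wedge product of a `p`-form and a `q`-form (coordinate formula). -/
noncomputable def wedge (p q : ℕ) (ξ η : Form n) : Form n := fun a x =>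
  ((p.factorial * q.factorial : ℕ) : ℝ)⁻¹ *
    ∑ σ : Equiv.Perm (Fin (p + q)),
      ((Equiv.Perm.sign σ : ℤ) : ℝ) *
        ξ (fun t => if h : t < p then a ((σ ⟨t, by omega⟩ : Fin (p + q)) : ℕ) else a t) x *
        η (fun t => if h : t < q then a ((σ ⟨p + t, by omega⟩ : Fin (p + q)) : ℕ) else a t) x

/-- Exterior derivative of a `p`-form:
`(dξ)_{a_0⋯a_p} = Σ_k (−1)^k ∂_{a_k} ξ_{a_0⋯(omit a_k)⋯a_p}`. -/
noncomputable def extd (p : ℕ) (ξ : Form n) : Form n := fun a x =>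
  ∑ k : Fin (p + 1),
    (-1 : ℝ) ^ (k : ℕ) *
      pd (a (k : ℕ)) (ξ (fun t => if t < (k : ℕ) then a t else a (t + 1))) x

/-- Interior product of a `p`-form with the `m`-th coordinate vector field
(zero on `0`-forms). -/
def intr (p : ℕ) (m : Fin n) (ξ : Form n) : Form n :=
  if p = 0 then (fun _ _ => 0)
  else fun a x => ξ (fun t => if t = 0 then m else a (t - 1)) x

/-- Interior product of a `p`-form with a vector field `v` (zero on `0`-forms). -/
noncomputable def iprod (p : ℕ) (v : Fin n → Pt n → ℝ) (ξ : Form n) : Form n :=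
  if p = 0 then (fun _ _ => 0)
  else fun a x => ∑ m, v m x * ξ (fun t => if t = 0 then m else a (t - 1)) x

/-- Covariant derivative of a `p`-form:
`(∇_i ξ)_{a_1⋯a_p} = ∂_i ξ_{a_1⋯a_p} − Σ_k Γ^m_{i a_k} ξ_{⋯ m ⋯}`. -/
noncomputable def nabla (Γ : Fin n → Fin n → Fin n → Pt n → ℝ) (i : Fin n) (p : ℕ)
    (ξ : Form n) : Form n := fun a x =>
  pd i (ξ a) x
    - ∑ k : Fin p, ∑ m, Γ m i (a (k : ℕ)) x * ξ (fun t => if t = (k : ℕ) then m else a t) x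

/-- Multiplication of a form by a scalar function. -/
def fmul (f : Pt n → ℝ) (ξ : Form n) : Form n := fun a x => f x * ξ a x

/-- `ξ` depends only on its first `p` index slots. -/
def DependsOn (p : ℕ) (ξ : Form n) : Prop :=
  ∀ a b : ℕ → Fin n, (∀ t, t < p → a t = b t) → ξ a = ξ b

/-- `ξ` is totally antisymmetric in its first `p` index slots. -/
def IsAnti (p : ℕ) (ξ : Form n) : Prop :=
  ∀ (a : ℕ → Fin n) (i j : ℕ), i < p → j < p → i ≠ j →
    ∀ x, ξ (fun t => a (Equiv.swap i j t)) x = - ξ a x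

/-- `ξ` has smooth coefficients on `U`. -/
def SmoothOn (U : Set (Pt n)) (ξ : Form n) : Prop :=
  ∀ a, ContDiffOn ℝ (⊤ : ℕ∞) (ξ a) U

/-- `ξ` is (the coefficient family of) a smooth `p`-form on `U`. -/
def IsPForm (U : Set (Pt n)) (p : ℕ) (ξ : Form n) : Prop :=
  DependsOn p ξ ∧ IsAnti p ξ ∧ SmoothOn U ξ

/-- Torsion `T^i_{jk} = Γ^i_{jk} - Γ^i_{kj}`. -/
def Tor (Γ : Fin n → Fin n → Fin n → Pt n → ℝ) (i j k : Fin n) (x : Pt n) : ℝ :=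
  Γ i j k x - Γ i k j x

/-- Curvature `R^l_{ijk} = ∂_j Γ^l_{ki} − ∂_k Γ^l_{ji} + Γ^m_{ki} Γ^l_{jm} − Γ^m_{ji} Γ^l_{km}`. -/
noncomputable def Rc (Γ : Fin n → Fin n → Fin n → Pt n → ℝ) (l i j k : Fin n)
    (x : Pt n) : ℝ :=
  pd j (Γ l k i) x - pd k (Γ l j i) x
    + ∑ m, Γ m k i x * Γ l j m x - ∑ m, Γ m j i x * Γ l k m x

/-- Covariant derivative of the torsion:
`T^j_{ab;s} = ∂_s T^j_{ab} + Γ^j_{sp} T^p_{ab} − Γ^p_{sa} T^j_{pb} − Γ^p_{sb} T^j_{ap}`. -/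
noncomputable def covT (Γ : Fin n → Fin n → Fin n → Pt n → ℝ) (j a b s : Fin n)
    (x : Pt n) : ℝ :=
  pd s (Tor Γ j a b) x + ∑ p, Γ j s p x * Tor Γ p a b x
    - ∑ p, Γ p s a x * Tor Γ j p b x - ∑ p, Γ p s b x * Tor Γ j a p x

/-- The pair `(ω, ∇)` is Poisson-compatible on `U`. -/
def PoissonCompat (U : Set (Pt n)) (ω : Fin n → Fin n → Pt n → ℝ)
    (Γ : Fin n → Fin n → Fin n → Pt n → ℝ) : Prop :=
  ∀ i j m, ∀ x ∈ U,
    pd m (ω i j) x + ∑ k, ω k j x * Γ i k m x + ∑ k, ω i k x * Γ j k m x = 0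

/-- The 2-form `H^{ij} = (1/4) ω^{is}(T^j_{nm;s} − 2 R^j_{nms}) dx^m ∧ dx^n`
(as a coefficient family, slots `(a 0, a 1) = (m, n)`). -/
noncomputable def Hform (ω : Fin n → Fin n → Pt n → ℝ)
    (Γ : Fin n → Fin n → Fin n → Pt n → ℝ) (i j : Fin n) : Form n := fun a x =>
  (1 / 4 : ℝ) * ∑ s, ω i s x *
    ((covT Γ j (a 1) (a 0) s x - 2 * Rc Γ j (a 1) (a 0) s x)
      - (covT Γ j (a 0) (a 1) s x - 2 * Rc Γ j (a 0) (a 1) s x))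

/-- The `λ`-correction term `(1/2) ω^{ij} ∇_i ξ ∧ ∇_j η` of the functorial product `∧_Q`. -/
noncomputable def Qcorr (ω : Fin n → Fin n → Pt n → ℝ)
    (Γ : Fin n → Fin n → Fin n → Pt n → ℝ) (p q : ℕ) (ξ η : Form n) : Form n :=
  (2⁻¹ : ℝ) • ∑ i, ∑ j, fmul (ω i j) (wedge p q (nabla Γ i p ξ) (nabla Γ j q η))

/-- `λ`-extended forms over `ℝ[λ]/(λ²)`: a pair `(ξ₀, ξ₁)` stands for `ξ₀ + λ ξ₁`. -/
abbrev FormL (n : ℕ) := Form n × Form n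

/-- Both components are smooth `p`-forms on `U`. -/
def IsPFormL (U : Set (Pt n)) (p : ℕ) (ξ : FormL n) : Prop :=
  IsPForm U p ξ.1 ∧ IsPForm U p ξ.2

/-- The order-`λ` nonlinear correction
`(−1)^{|ξ|+1} Σ_{i,j} H^{ij} ∧ (∂_i⌟ξ) ∧ (∂_j⌟η)`. -/
noncomputable def HatCorr (ω : Fin n → Fin n → Pt n → ℝ)
    (Γ : Fin n → Fin n → Fin n → Pt n → ℝ) (p q : ℕ) (ξ η : Form n) : Form n :=
  ((-1 : ℝ) ^ (p + 1)) •
    ∑ i, ∑ j,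
      wedge (2 + (p - 1)) (q - 1)
        (wedge 2 (p - 1) (Hform ω Γ i j) (intr p i ξ)) (intr q j η)

/-- The quantum wedge product `∧₁` on `λ`-extended forms:
`ξ ∧₁ η = ξ ∧ η + (λ/2) ω^{ij} ∇_i ξ ∧ ∇_j η
  + λ (−1)^{|ξ|+1} H^{ij} ∧ (∂_i⌟ξ) ∧ (∂_j⌟η)`, extended `λ`-bilinearly. -/
noncomputable def wedge1 (ω : Fin n → Fin n → Pt n → ℝ)
    (Γ : Fin n → Fin n → Fin n → Pt n → ℝ) (p q : ℕ) (ξ η : FormL n) : FormL n :=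
  (wedge p q ξ.1 η.1,
   wedge p q ξ.1 η.2 + wedge p q ξ.2 η.1
     + Qcorr ω Γ p q ξ.1 η.1 + HatCorr ω Γ p q ξ.1 η.1)

/-- The (undeformed) exterior derivative on `λ`-extended forms. -/
noncomputable def extdL (p : ℕ) (ξ : FormL n) : FormL n := (extd p ξ.1, extd p ξ.2)

/-- The 1-form `Γ^i_{r p} dx^p` (with `i, r` fixed). -/
def GammaOne (Γ : Fin n → Fin n → Fin n → Pt n → ℝ) (i r : Fin n) : Form n :=
  fun a x => Γ i r (a 0) x

/-- Symmetry of the `H^{ij}` in `i, j` (as 2-forms on `U`). -/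
def HSymm (U : Set (Pt n)) (ω : Fin n → Fin n → Pt n → ℝ)
    (Γ : Fin n → Fin n → Fin n → Pt n → ℝ) : Prop :=
  ∀ i j a, ∀ x ∈ U, Hform ω Γ i j a x = Hform ω Γ j i a x

/-- The condition `dH^{ij} + Γ^i_{rp} dx^p ∧ H^{rj} + Γ^j_{rp} dx^p ∧ H^{ir} = 0` on `U`. -/
def HClosed (U : Set (Pt n)) (ω : Fin n → Fin n → Pt n → ℝ)
    (Γ : Fin n → Fin n → Fin n → Pt n → ℝ) : Prop :=
  ∀ i j a, ∀ x ∈ U,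
    (extd 2 (Hform ω Γ i j)
      + ∑ r, wedge 1 2 (GammaOne Γ i r) (Hform ω Γ r j)
      + ∑ r, wedge 1 2 (GammaOne Γ j r) (Hform ω Γ i r)) a x = 0

/-- Associativity of `∧₁` on `U`, on (λ-extended) homogeneous smooth forms. -/
def WedgeAssoc (U : Set (Pt n)) (ω : Fin n → Fin n → Pt n → ℝ)
    (Γ : Fin n → Fin n → Fin n → Pt n → ℝ) : Prop :=
  ∀ (p q r : ℕ) (ξ η ζ : FormL n),
    IsPFormL U p ξ → IsPFormL U q η → IsPFormL U r ζ →
    ∀ a, ∀ x ∈ U,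
      (wedge1 ω Γ (p + q) r (wedge1 ω Γ p q ξ η) ζ).1 a x
          = (wedge1 ω Γ p (q + r) ξ (wedge1 ω Γ q r η ζ)).1 a x ∧
      (wedge1 ω Γ (p + q) r (wedge1 ω Γ p q ξ η) ζ).2 a x
          = (wedge1 ω Γ p (q + r) ξ (wedge1 ω Γ q r η ζ)).2 a x

/-- The graded Leibniz rule for `d` with respect to `∧₁` on `U`. -/
def LeibnizRule (U : Set (Pt n)) (ω : Fin n → Fin n → Pt n → ℝ)
    (Γ : Fin n → Fin n → Fin n → Pt n → ℝ) : Prop :=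
  ∀ (p q : ℕ) (ξ η : FormL n),
    IsPFormL U p ξ → IsPFormL U q η →
    ∀ a, ∀ x ∈ U,
      (extdL (p + q) (wedge1 ω Γ p q ξ η)).1 a x
          = (wedge1 ω Γ (p + 1) q (extdL p ξ) η
              + ((-1 : ℝ) ^ p) • wedge1 ω Γ p (q + 1) ξ (extdL q η)).1 a x ∧
      (extdL (p + q) (wedge1 ω Γ p q ξ η)).2 a x
          = (wedge1 ω Γ (p + 1) q (extdL p ξ) η
              + ((-1 : ℝ) ^ p) • wedge1 ω Γ p (q + 1) ξ (extdL q η)).2 a x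

set_option linter.unusedSectionVars false

/-- The exterior algebra in which forms at a point are represented. -/
abbrev EA (n : ℕ) := ExteriorAlgebra ℝ (Fin n → ℝ)

/-- The basis covector `dx^i`. -/
noncomputable def eg (i : Fin n) : EA n := ExteriorAlgebra.ι ℝ (Pi.single i 1)

/-- The basis monomial. -/
noncomputable def eb {p : ℕ} (b : Fin p → Fin n) : EA n :=
  ExteriorAlgebra.ιMulti ℝ p (fun t => Pi.single (b t) (1 : ℝ))

/-- Extend a finite index tuple to all of `ℕ`. -/
def ex [NeZero n] {p : ℕ} (b : Fin p → Fin n) : ℕ → Fin n :=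
  fun t => if h : t < p then b ⟨t, h⟩ else 0

/-- A `p`-form at a point as an element of the exterior algebra. -/
noncomputable def Ph [NeZero n] (p : ℕ) (ξ : Form n) (x : Pt n) : EA n :=
  (p.factorial : ℝ)⁻¹ • ∑ b : Fin p → Fin n, ξ (ex b) x • eb b

lemma eb_perm {p : ℕ} (b : Fin p → Fin n) (σ : Equiv.Perm (Fin p)) :
    eb (b ∘ σ) = ((Equiv.Perm.sign σ : ℤ) : ℝ) • eb b := by
  have := (ExteriorAlgebra.ιMulti ℝ p).map_perm
    (fun t => (Pi.single (b t) (1 : ℝ) : Fin n → ℝ)) σ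
  unfold eb
  rw [Int.cast_smul_eq_zsmul]
  exact this

lemma sgn_sq {p : ℕ} (σ : Equiv.Perm (Fin p)) :
    ((Equiv.Perm.sign σ : ℤ) : ℝ) * ((Equiv.Perm.sign σ : ℤ) : ℝ) = 1 := by
  have h := Int.units_mul_self (Equiv.Perm.sign σ)
  have : ((Equiv.Perm.sign σ : ℤ)) * ((Equiv.Perm.sign σ : ℤ)) = 1 := by
    rw [← Units.val_mul, h, Units.val_one]
  exact_mod_cast this

lemma sum_alt {p : ℕ} (G : (Fin p → Fin n) → ℝ) :
    ∑ b : Fin p → Fin n, (∑ σ : Equiv.Perm (Fin p),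
        ((Equiv.Perm.sign σ : ℤ) : ℝ) * G (b ∘ σ)) • eb b
      = (p.factorial : ℝ) • ∑ b : Fin p → Fin n, G b • eb b := by
  simp_rw [Finset.sum_smul]
  rw [Finset.sum_comm]
  have : ∀ σ : Equiv.Perm (Fin p), ∑ b : Fin p → Fin n,
      (((Equiv.Perm.sign σ : ℤ) : ℝ) * G (b ∘ σ)) • eb b
      = ∑ b : Fin p → Fin n, G b • eb b := by
    intro σ
    refine Fintype.sum_equiv (Equiv.arrowCongr σ.symm (Equiv.refl _)) _ _ ?_
    intro b
    have : (Equiv.arrowCongr σ.symm (Equiv.refl (Fin n))) b = b ∘ σ := by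
      ext t; simp [Equiv.arrowCongr]
    rw [this, eb_perm, smul_smul, mul_comm]
  rw [Finset.sum_congr rfl (fun σ _ => this σ)]
  simp [Fintype.card_perm, ← Nat.cast_smul_eq_nsmul ℝ]

lemma eb_append {p q : ℕ} (b : Fin p → Fin n) (c : Fin q → Fin n) :
    eb (Fin.append b c) = eb b * eb c := by
  unfold eb
  rw [ExteriorAlgebra.ιMulti_mul_ιMulti]
  congr 1
  ext t
  refine Fin.addCases (fun i => ?_) (fun i => ?_) t <;> simp

lemma eb_cons {p : ℕ} (k : Fin n) (b : Fin p → Fin n) :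
    eb (Fin.cons k b : Fin (p+1) → Fin n) = eg k * eb b := by
  unfold eb eg
  rw [ExteriorAlgebra.ιMulti_succ_apply]
  simp [Matrix.vecTail, Function.comp_def]

section
variable [NeZero n]

lemma ex_lt {p : ℕ} (b : Fin p → Fin n) {t : ℕ} (h : t < p) : ex b t = b ⟨t, h⟩ := by
  simp [ex, h]

lemma dep_ex {p : ℕ} {ξ : Form n} (h : DependsOn p ξ) (a : ℕ → Fin n) :
    ξ a = ξ (ex (fun t : Fin p => a t)) := by
  apply h
  intro t ht
  simp [ex, ht]

lemma Ph_wedge {p q : ℕ} {ξ η : Form n} (hξ : DependsOn p ξ) (hη : DependsOn q η) (x : Pt n) :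
    Ph (p + q) (wedge p q ξ η) x = Ph p ξ x * Ph q η x := by
  have key : ∀ b : Fin (p+q) → Fin n, wedge p q ξ η (ex b) x =
      ∑ σ : Equiv.Perm (Fin (p + q)), ((Equiv.Perm.sign σ : ℤ) : ℝ) *
        (fun c : Fin (p+q) → Fin n => ((p.factorial * q.factorial : ℕ) : ℝ)⁻¹ *
          (ξ (ex (fun t : Fin p => c (Fin.castAdd q t))) x *
            η (ex (fun t : Fin q => c (Fin.natAdd p t))) x)) (b ∘ σ) := by
    intro b
    unfold wedge
    rw [Finset.mul_sum]
    refine Finset.sum_congr rfl fun σ _ => ?_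
    have h1 : ξ (fun t => if h : t < p then ex b ((σ ⟨t, by omega⟩ : Fin (p + q)) : ℕ) else ex b t)
        = ξ (ex (fun t : Fin p => (b ∘ σ) (Fin.castAdd q t))) := by
      apply hξ
      intro t ht
      simp [ex, ht, Fin.castAdd, Fin.castLE]
    have h2 : η (fun t => if h : t < q then ex b ((σ ⟨p + t, by omega⟩ : Fin (p + q)) : ℕ)
          else ex b t)
        = η (ex (fun t : Fin q => (b ∘ σ) (Fin.natAdd p t))) := by
      apply hη
      intro t ht
      simp [ex, ht, Fin.natAdd]
    rw [h1, h2]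
    ring
  unfold Ph
  rw [Finset.sum_congr rfl (fun b _ => by rw [key b])]
  rw [sum_alt (fun c : Fin (p+q) → Fin n => ((p.factorial * q.factorial : ℕ) : ℝ)⁻¹ *
          (ξ (ex (fun t : Fin p => c (Fin.castAdd q t))) x *
            η (ex (fun t : Fin q => c (Fin.natAdd p t))) x)), smul_smul, inv_mul_cancel₀ (by positivity), one_smul]
  rw [← Fintype.sum_equiv (Fin.appendEquiv p q) (fun bc : (Fin p → Fin n) × (Fin q → Fin n) =>
    (((p.factorial * q.factorial : ℕ) : ℝ)⁻¹ * (ξ (ex bc.1) x * η (ex bc.2) x)) •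
      (eb bc.1 * eb bc.2)) _ (by
        rintro ⟨b, c⟩
        simp [Fin.appendEquiv, eb_append])]
  rw [Fintype.sum_prod_type, smul_mul_smul_comm, Finset.sum_mul_sum, Finset.smul_sum]
  refine Finset.sum_congr rfl fun b _ => ?_
  rw [Finset.smul_sum]
  refine Finset.sum_congr rfl fun c _ => ?_
  rw [smul_mul_smul_comm, smul_smul]
  push_cast
  rw [mul_inv]

lemma Ph_succ (p : ℕ) (ξ : Form n) (x : Pt n) :
    Ph (p+1) ξ x = ((p : ℝ) + 1)⁻¹ • ∑ k, eg k * Ph p (intr (p+1) k ξ) x := by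
  unfold Ph
  rw [← Fintype.sum_equiv (Fin.consEquiv (fun _ : Fin (p+1) => Fin n))
    (fun kb : Fin n × (Fin p → Fin n) => intr (p+1) kb.1 ξ (ex kb.2) x • (eg kb.1 * eb kb.2)) _ (by
      rintro ⟨k, b⟩
      simp only [Fin.consEquiv, Equiv.coe_fn_mk, eb_cons]
      congr 1
      simp only [intr, Nat.add_eq_zero_iff, one_ne_zero, and_false, if_false]
      congr 1
      congr 1
      ext t
      rcases t with _ | t
      · simp [ex]
      · by_cases h : t < p
        · simp only [ex]
          rw [dif_pos (show t + 1 < p + 1 by omega)]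
          simp [h]
          rfl
        · simp [ex, h])]
  rw [Fintype.sum_prod_type, Nat.factorial_succ]
  push_cast
  rw [mul_inv, mul_smul]
  congr 1
  rw [Finset.smul_sum]
  refine Finset.sum_congr rfl fun k _ => ?_
  rw [mul_smul_comm, Finset.mul_sum]
  congr 1
  refine Finset.sum_congr rfl fun b _ => ?_
  rw [mul_smul_comm]

lemma Ph_add (p : ℕ) (ξ η : Form n) (x : Pt n) : Ph p (ξ + η) x = Ph p ξ x + Ph p η x := by
  simp [Ph, add_smul, Finset.sum_add_distrib]

lemma Ph_smul (p : ℕ) (c : ℝ) (ξ : Form n) (x : Pt n) : Ph p (c • ξ) x = c • Ph p ξ x := by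
  simp only [Ph, Pi.smul_apply, smul_eq_mul, Finset.smul_sum, smul_smul]
  refine Finset.sum_congr rfl fun k _ => ?_
  congr 1; ring

lemma Ph_fmul (p : ℕ) (f : Pt n → ℝ) (ξ : Form n) (x : Pt n) :
    Ph p (fmul f ξ) x = f x • Ph p ξ x := by
  simp only [Ph, fmul, Finset.smul_sum, smul_smul]
  refine Finset.sum_congr rfl fun k _ => ?_
  congr 1; ring

lemma Ph_zero (p : ℕ) (x : Pt n) : Ph p (0 : Form n) x = 0 := by simp [Ph]

lemma Ph_sum {ι : Type*} (s : Finset ι) (p : ℕ) (f : ι → Form n) (x : Pt n) :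
    Ph p (∑ i ∈ s, f i) x = ∑ i ∈ s, Ph p (f i) x := by
  classical
  induction s using Finset.induction_on with
  | empty => simp [Ph_zero]
  | insert i s hi ih => rw [Finset.sum_insert hi, Finset.sum_insert hi, Ph_add, ih]

lemma Ph_neg (p : ℕ) (ξ : Form n) (x : Pt n) : Ph p (-ξ) x = - Ph p ξ x := by
  simp [Ph]

lemma Ph_congr (p : ℕ) {ξ η : Form n} {x : Pt n} (h : ∀ a, ξ a x = η a x) :
    Ph p ξ x = Ph p η x := by
  simp [Ph, h]

/-- contraction -/
noncomputable def ct (m : Fin n) : EA n →ₗ[ℝ] EA n :=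
  CliffordAlgebra.contractLeft (Q := (0 : QuadraticForm ℝ (Fin n → ℝ))) (LinearMap.proj m)

lemma ct_eg_mul (m k : Fin n) (X : EA n) :
    ct m (eg k * X) = (if m = k then (1:ℝ) else 0) • X - eg k * ct m X := by
  have := CliffordAlgebra.contractLeft_ι_mul (Q := (0 : QuadraticForm ℝ (Fin n → ℝ)))
    (d := LinearMap.proj m) (Pi.single k (1:ℝ)) X
  rw [LinearMap.proj_apply, Pi.single_apply] at this
  exact this

lemma dep_intr {p : ℕ} {ξ : Form n} (h : DependsOn p ξ) (m : Fin n) :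
    DependsOn (p - 1) (intr p m ξ) := by
  intro a b hab
  rcases p with _ | p
  · simp [intr]
  · simp only [intr, Nat.add_eq_zero_iff, one_ne_zero, and_false, if_false]
    funext x
    refine congrFun (h _ _ ?_) x
    intro t ht
    rcases t with _ | t
    · simp
    · simpa using hab t (by omega)

lemma anti_intr {p : ℕ} {ξ : Form n} (h : IsAnti p ξ) (m : Fin n) :
    IsAnti (p - 1) (intr p m ξ) := by
  intro a i j hi hj hij x
  rcases p with _ | p
  · simp [intr]
  · simp only [intr, Nat.add_eq_zero_iff, one_ne_zero, and_false, if_false]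
    rw [← h (fun t => if t = 0 then m else a (t - 1)) (i+1) (j+1) (by omega) (by omega) (by omega)]
    congr 1
    funext t
    rcases t with _ | t
    · have h0 : Equiv.swap (i+1) (j+1) 0 = 0 :=
        Equiv.swap_apply_of_ne_of_ne (by omega) (by omega)
      simp [h0]
    · simp only [Equiv.swap_apply_def, Nat.add_right_cancel_iff]
      split_ifs <;> first | rfl | omega

lemma intr_intr {p : ℕ} {ξ : Form n} (h : IsAnti (p+2) ξ) (m k : Fin n) (a : ℕ → Fin n) (x : Pt n) :
    intr (p+1) m (intr (p+2) k ξ) a x = - intr (p+1) k (intr (p+2) m ξ) a x := by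
  simp only [intr, Nat.add_eq_zero_iff, one_ne_zero, and_false, if_false,
    OfNat.ofNat_ne_zero]
  rw [← h _ 0 1 (by omega) (by omega) (by omega)]
  congr 1
  funext t
  rcases t with _ | _ | t
  · simp
  · simp
  · rw [Equiv.swap_apply_of_ne_of_ne (by omega) (by omega)]; simp

lemma ct_Ph {p : ℕ} {ξ : Form n} (h : IsAnti p ξ) (m : Fin n) (x : Pt n) :
    ct m (Ph p ξ x) = Ph (p - 1) (intr p m ξ) x := by
  induction p generalizing ξ m with
  | zero =>
    have : ct m (Ph 0 ξ x) = 0 := by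
      unfold Ph
      rw [map_smul, map_sum]
      simp only [map_smul]
      have : ∀ b : Fin 0 → Fin n, ct m (eb b) = 0 := by
        intro b
        simp only [eb, ExteriorAlgebra.ιMulti_zero_apply]
        exact CliffordAlgebra.contractLeft_one (Q := (0 : QuadraticForm ℝ (Fin n → ℝ)))
          (d := LinearMap.proj m)
      simp [this]
    rw [this]
    simp [intr, Ph]
  | succ p ih =>
    rw [Ph_succ, map_smul, map_sum]
    simp_rw [ct_eg_mul]
    rw [Finset.sum_sub_distrib]
    simp only [ite_smul, one_smul, zero_smul, Finset.sum_ite_eq, Finset.mem_univ, if_true]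
    have h2 : ∀ k, ct m (Ph p (intr (p+1) k ξ) x) = Ph (p-1) (intr p m (intr (p+1) k ξ)) x :=
      fun k => ih (anti_intr h k) m
    simp_rw [h2]
    rcases p with _ | p
    · simp [intr, Ph]
    · have h3 : ∀ k, Ph p (intr (p+1) m (intr (p+1+1) k ξ)) x
          = - Ph p (intr (p+1) k (intr (p+1+1) m ξ)) x := by
        intro k
        rw [← Ph_neg]
        apply Ph_congr
        intro a
        exact intr_intr h m k a x
      simp only [Nat.add_sub_cancel, h3, mul_neg, Finset.sum_neg_distrib, sub_neg_eq_add]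
      have h4 := Ph_succ p (intr (p+1+1) m ξ) x
      have h5 : ∑ k, eg k * Ph p (intr (p+1) k (intr (p+1+1) m ξ)) x
          = ((p:ℝ)+1) • Ph (p+1) (intr (p+1+1) m ξ) x := by
        rw [h4, smul_smul, mul_inv_cancel₀ (by positivity), one_smul]
      rw [h5]
      nth_rewrite 1 [← one_smul ℝ (Ph (p+1) (intr (p+1+1) m ξ) x)]
      rw [← add_smul, smul_smul]
      push_cast
      rw [show ((p:ℝ)+1+1)⁻¹ * (1 + ((p:ℝ)+1)) = 1 by field_simp; ring, one_smul]

lemma anti_perm {p : ℕ} {ξ : Form n} (h : IsAnti p ξ) (hd : DependsOn p ξ) (x : Pt n)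
    (σ : Equiv.Perm (Fin p)) :
    ∀ b : Fin p → Fin n, ξ (ex (b ∘ σ)) x = ((Equiv.Perm.sign σ : ℤ) : ℝ) * ξ (ex b) x := by
  induction σ using Equiv.Perm.swap_induction_on with
  | one => intro b; simp
  | swap_mul f i j hij ih =>
    intro b
    have e1 : b ∘ (Equiv.swap i j * f : Equiv.Perm (Fin p)) = (b ∘ Equiv.swap i j) ∘ f := by
      ext; simp
    rw [e1, ih]
    have e2 : ξ (ex (b ∘ Equiv.swap i j)) = ξ (fun t => ex b (Equiv.swap (i:ℕ) (j:ℕ) t)) := by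
      apply hd
      intro t ht
      rw [ex_lt _ ht]
      simp only [Function.comp, Equiv.swap_apply_def, Fin.ext_iff]
      split_ifs
      · rw [ex_lt _ j.2]
      · rw [ex_lt _ i.2]
      · rw [ex_lt _ ht]
    rw [e2, h _ _ _ i.2 j.2 (fun hh => hij (Fin.ext hh))]
    simp [Equiv.Perm.sign_mul, Equiv.Perm.sign_swap hij]

/-- the coordinate functional extracting a coefficient -/
noncomputable def pr {p : ℕ} (b : Fin p → Fin n) : EA n →ₗ[ℝ] ℝ :=
  ExteriorAlgebra.liftAlternating (fun i => if h : i = p then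
    (Matrix.detRowAlternating (n := Fin i) (R := ℝ)).compLinearMap
      (LinearMap.pi (fun j : Fin i => LinearMap.proj (b (Fin.cast h j)))) else 0)

lemma pr_eb {p : ℕ} (b c : Fin p → Fin n) :
    pr b (eb c) = ∑ σ : Equiv.Perm (Fin p), ((Equiv.Perm.sign σ : ℤ) : ℝ) *
      (if c = b ∘ σ then 1 else 0) := by
  unfold pr eb
  rw [ExteriorAlgebra.liftAlternating_apply_ιMulti]
  simp only [dif_pos, Fin.cast_eq_self, AlternatingMap.compLinearMap_apply]
  change Matrix.det (Matrix.of fun i => (LinearMap.pi fun j =>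
    LinearMap.proj (R := ℝ) (φ := fun _ : Fin n => ℝ) (b j)) (Pi.single (c i) (1:ℝ))) = _
  rw [← Matrix.det_transpose, Matrix.det_apply']
  refine Finset.sum_congr rfl fun σ _ => ?_
  congr 1
  simp only [Matrix.transpose_apply, Matrix.of_apply]
  have : ∀ i, (LinearMap.pi fun j => LinearMap.proj (R := ℝ) (φ := fun _ : Fin n => ℝ) (b j)) (Pi.single (c i) (1:ℝ)) (σ i)
      = if c i = b (σ i) then (1:ℝ) else 0 := by
    intro i
    simp [Pi.single_apply, eq_comm]
  simp only [this]
  rw [Finset.prod_ite_zero]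
  simp [funext_iff]

lemma pr_Ph {p : ℕ} {ξ : Form n} (h : IsAnti p ξ) (hd : DependsOn p ξ) (x : Pt n)
    (b : Fin p → Fin n) : pr b (Ph p ξ x) = ξ (ex b) x := by
  unfold Ph
  rw [map_smul, map_sum]
  simp only [map_smul, pr_eb, smul_eq_mul, Finset.mul_sum]
  rw [Finset.sum_congr rfl (fun c _ => rfl), Finset.sum_comm]
  have : ∀ σ : Equiv.Perm (Fin p), ∑ c : Fin p → Fin n, (p.factorial : ℝ)⁻¹ * (ξ (ex c) x *
      (((Equiv.Perm.sign σ : ℤ) : ℝ) * (if c = b ∘ σ then 1 else 0)))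
      = (p.factorial : ℝ)⁻¹ * ξ (ex b) x := by
    intro σ
    rw [Finset.sum_eq_single (b ∘ σ) (by intro c _ hc; simp [hc]) (by simp)]
    rw [anti_perm h hd]
    simp only [if_true]
    linear_combination ((p.factorial : ℝ)⁻¹ * ξ (ex b) x) * sgn_sq σ
  rw [Finset.sum_congr rfl (fun σ _ => this σ)]
  simp [Fintype.card_perm]
  field_simp

lemma Ph_inj {N M : ℕ} (hNM : N = M) {ξ η : Form n} (h : IsAnti N ξ) (hd : DependsOn N ξ)
    (h' : IsAnti M η) (hd' : DependsOn M η) {x : Pt n} (hP : Ph N ξ x = Ph M η x)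
    (a : ℕ → Fin n) : ξ a x = η a x := by
  subst hNM
  rw [dep_ex hd a, dep_ex hd' a, ← pr_Ph h hd, ← pr_Ph h' hd', hP]

end

/-- coefficientwise partial derivative -/
noncomputable def DD (k : Fin n) (ξ : Form n) : Form n := fun a x => pd k (ξ a) x

/-- algebraic part of the covariant derivative -/
noncomputable def gt (G : Fin n → Fin n → Pt n → ℝ) (p : ℕ) (ξ : Form n) : Form n := fun a x =>
  ∑ k : Fin p, ∑ m, G m (a (k : ℕ)) x * ξ (fun t => if t = (k : ℕ) then m else a t) x

lemma nabla_eq (Γ : Fin n → Fin n → Fin n → Pt n → ℝ) (i : Fin n) (p : ℕ) (ξ : Form n) :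
    nabla Γ i p ξ = DD i ξ + - gt (fun m j => Γ m i j) p ξ := by
  funext a x
  simp [nabla, DD, gt, sub_eq_add_neg]

lemma dep_DD {p : ℕ} {ξ : Form n} (h : DependsOn p ξ) (k : Fin n) : DependsOn p (DD k ξ) := by
  intro a b hab
  funext x
  simp only [DD, h a b hab]

lemma anti_DD {p : ℕ} {ξ : Form n} (h : IsAnti p ξ) (k : Fin n) : IsAnti p (DD k ξ) := by
  intro a i j hi hj hij x
  have : ξ (fun t => a (Equiv.swap i j t)) = - ξ a := by
    funext y; exact h a i j hi hj hij y
  simp only [DD, pd, this]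
  rw [fderiv_neg]
  rfl

lemma dep_gt {p : ℕ} {ξ : Form n} (h : DependsOn p ξ) (G : Fin n → Fin n → Pt n → ℝ) :
    DependsOn p (gt G p ξ) := by
  intro a b hab
  funext x
  simp only [gt]
  refine Finset.sum_congr rfl fun k _ => Finset.sum_congr rfl fun m _ => ?_
  rw [hab k k.2, h _ (fun t => if t = (k : ℕ) then m else b t)]
  intro t ht
  simp only [hab t ht]

lemma dep_add {p : ℕ} {ξ η : Form n} (h : DependsOn p ξ) (h' : DependsOn p η) :
    DependsOn p (ξ + η) := by
  intro a b hab
  simp only [Pi.add_apply, h a b hab, h' a b hab]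

lemma dep_neg {p : ℕ} {ξ : Form n} (h : DependsOn p ξ) : DependsOn p (-ξ) := by
  intro a b hab
  simp only [Pi.neg_apply, h a b hab]

lemma dep_smul {p : ℕ} {ξ : Form n} (c : ℝ) (h : DependsOn p ξ) : DependsOn p (c • ξ) := by
  intro a b hab
  simp only [Pi.smul_apply, h a b hab]

lemma dep_fmul {p : ℕ} {ξ : Form n} (f : Pt n → ℝ) (h : DependsOn p ξ) :
    DependsOn p (fmul f ξ) := by
  intro a b hab
  funext x
  simp only [fmul, h a b hab]

lemma dep_zero {p : ℕ} : DependsOn p (0 : Form n) := by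
  intro a b _; rfl

lemma dep_sum {ι : Type*} {s : Finset ι} {p : ℕ} {f : ι → Form n} (h : ∀ i, DependsOn p (f i)) :
    DependsOn p (∑ i ∈ s, f i) := by
  intro a b hab
  simp only [Finset.sum_apply, fun i => h i a b hab]

lemma anti_add {p : ℕ} {ξ η : Form n} (h : IsAnti p ξ) (h' : IsAnti p η) :
    IsAnti p (ξ + η) := by
  intro a i j hi hj hij x
  simp only [Pi.add_apply, h a i j hi hj hij, h' a i j hi hj hij]
  ring

lemma anti_smul {p : ℕ} {ξ : Form n} (c : ℝ) (h : IsAnti p ξ) :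
    IsAnti p (c • ξ) := by
  intro a i j hi hj hij x
  simp only [Pi.smul_apply, h a i j hi hj hij, smul_neg]

lemma anti_fmul {p : ℕ} {ξ : Form n} (f : Pt n → ℝ) (h : IsAnti p ξ) :
    IsAnti p (fmul f ξ) := by
  intro a i j hi hj hij x
  simp only [fmul, h a i j hi hj hij, mul_neg]

lemma anti_zero {p : ℕ} : IsAnti p (0 : Form n) := by
  intro a i j hi hj hij x; simp

lemma anti_sum {ι : Type*} {s : Finset ι} {p : ℕ} {f : ι → Form n} (h : ∀ i, IsAnti p (f i)) :
    IsAnti p (∑ i ∈ s, f i) := by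
  intro a i j hi hj hij x
  simp only [Finset.sum_apply, fun l => h l a i j hi hj hij, Finset.sum_neg_distrib]

lemma dep_wedge {p q : ℕ} {ξ η : Form n} (hξ : DependsOn p ξ) (hη : DependsOn q η) :
    DependsOn (p + q) (wedge p q ξ η) := by
  intro a b hab
  funext x
  unfold wedge
  congr 1
  refine Finset.sum_congr rfl fun σ _ => ?_
  congr 1
  · congr 1
    refine congrFun (hξ _ _ ?_) x
    intro t ht
    simp only [dif_pos ht]
    exact hab _ (Fin.is_lt _)
  · refine congrFun (hη _ _ ?_) x
    intro t ht
    simp only [dif_pos ht]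
    exact hab _ (Fin.is_lt _)

lemma dep_extd {p : ℕ} {ξ : Form n} (hξ : DependsOn p ξ) :
    DependsOn (p + 1) (extd p ξ) := by
  intro a b hab
  funext x
  unfold extd
  refine Finset.sum_congr rfl fun k _ => ?_
  rw [hab k k.2]
  congr 2
  refine hξ _ _ ?_
  intro t ht
  split_ifs
  · exact hab _ (by omega)
  · exact hab _ (by omega)

section
variable [NeZero n]

lemma anti_of_alt {N : ℕ} {ξ : Form n} (hd : DependsOn N ξ) (G : Pt n → (Fin N → Fin n) → ℝ)
    (h : ∀ b x, ξ (ex b) x = ∑ σ : Equiv.Perm (Fin N), ((Equiv.Perm.sign σ : ℤ) : ℝ)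
      * G x (b ∘ σ)) : IsAnti N ξ := by
  intro a i j hi hj hij x
  have e1 : (fun t : Fin N => a (Equiv.swap i j t))
      = (fun t : Fin N => a t) ∘ Equiv.swap (⟨i, hi⟩ : Fin N) ⟨j, hj⟩ := by
    funext t
    simp only [Function.comp, Equiv.swap_apply_def, Fin.ext_iff]
    split_ifs <;> rfl
  rw [dep_ex hd, dep_ex hd a, e1, h, h, ← Finset.sum_neg_distrib]
  refine Fintype.sum_equiv (Equiv.mulLeft (Equiv.swap (⟨i, hi⟩ : Fin N) ⟨j, hj⟩)) _ _ ?_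
  intro σ
  have hne : (⟨i, hi⟩ : Fin N) ≠ ⟨j, hj⟩ := by simpa [Fin.ext_iff] using hij
  have e2 : ((fun t : Fin N => a t) ∘ Equiv.swap (⟨i, hi⟩ : Fin N) ⟨j, hj⟩) ∘ σ
     = (fun t : Fin N => a t) ∘ (Equiv.mulLeft (Equiv.swap (⟨i, hi⟩ : Fin N) ⟨j, hj⟩) σ) := by
    funext t; simp
  rw [e2]
  simp [Equiv.Perm.sign_mul, Equiv.Perm.sign_swap hne]

lemma wedge_ex {p q : ℕ} {ξ η : Form n} (hξ : DependsOn p ξ) (hη : DependsOn q η)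
    (b : Fin (p+q) → Fin n) (x : Pt n) : wedge p q ξ η (ex b) x =
      ∑ σ : Equiv.Perm (Fin (p + q)), ((Equiv.Perm.sign σ : ℤ) : ℝ) *
        (fun (x : Pt n) (c : Fin (p+q) → Fin n) => ((p.factorial * q.factorial : ℕ) : ℝ)⁻¹ *
          (ξ (ex (fun t : Fin p => c (Fin.castAdd q t))) x *
            η (ex (fun t : Fin q => c (Fin.natAdd p t))) x)) x (b ∘ σ) := by
  unfold wedge
  rw [Finset.mul_sum]
  refine Finset.sum_congr rfl fun σ _ => ?_
  have h1 : ξ (fun t => if h : t < p then ex b ((σ ⟨t, by omega⟩ : Fin (p + q)) : ℕ) else ex b t)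
      = ξ (ex (fun t : Fin p => (b ∘ σ) (Fin.castAdd q t))) := by
    apply hξ
    intro t ht
    simp [ex, ht, Fin.castAdd, Fin.castLE]
  have h2 : η (fun t => if h : t < q then ex b ((σ ⟨p + t, by omega⟩ : Fin (p + q)) : ℕ)
        else ex b t)
      = η (ex (fun t : Fin q => (b ∘ σ) (Fin.natAdd p t))) := by
    apply hη
    intro t ht
    simp [ex, ht, Fin.natAdd]
  rw [h1, h2]
  ring

lemma anti_wedge {p q : ℕ} {ξ η : Form n} (hξ : DependsOn p ξ) (hη : DependsOn q η) :
    IsAnti (p + q) (wedge p q ξ η) :=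
  anti_of_alt (dep_wedge hξ hη) (fun (x : Pt n) (c : Fin (p+q) → Fin n) =>
    ((p.factorial * q.factorial : ℕ) : ℝ)⁻¹ * (ξ (ex (fun t : Fin p => c (Fin.castAdd q t))) x *
            η (ex (fun t : Fin q => c (Fin.natAdd p t))) x)) (wedge_ex hξ hη)

lemma extd_ex {p : ℕ} {ξ : Form n} (hξ : DependsOn p ξ) (ha : IsAnti p ξ)
    (b : Fin (p+1) → Fin n) (x : Pt n) : extd p ξ (ex b) x =
      ∑ σ : Equiv.Perm (Fin (p + 1)), ((Equiv.Perm.sign σ : ℤ) : ℝ) *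
        (fun (x : Pt n) (c : Fin (p+1) → Fin n) => (p.factorial : ℝ)⁻¹ *
          DD (c 0) ξ (ex (fun t : Fin p => c t.succ)) x) x (b ∘ σ) := by
  rw [Finset.univ_perm_fin_succ, ← Finset.univ_product_univ]
  simp only [Finset.sum_map, Equiv.toEmbedding_apply, Finset.sum_product]
  unfold extd
  refine Finset.sum_congr rfl fun k _ => ?_
  have hL : pd (ex b (k : ℕ)) (ξ (fun t => if t < (k : ℕ) then ex b t else ex b (t + 1))) x
      = DD (b k) ξ (ex (fun t : Fin p => b (k.succAbove t))) x := by
    rw [ex_lt b k.2]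
    simp only [DD, Fin.eta]
    congr 1
    apply hξ
    intro t ht
    rw [ex_lt _ ht]
    by_cases h : t < (k : ℕ)
    · rw [if_pos h, ex_lt b (by omega)]
      congr 1
      rw [Fin.succAbove_of_castSucc_lt _ _ (by simpa [Fin.lt_def] using h)]
      rfl
    · rw [if_neg h, ex_lt b (by omega)]
      congr 1
      rw [Fin.succAbove_of_le_castSucc _ _ (by simpa [Fin.le_def] using h)]
      rfl
  rw [hL]
  have hT : ∀ τ : Equiv.Perm (Fin p),
      ((Equiv.Perm.sign (Equiv.Perm.decomposeFin.symm (k, τ)) : ℤ) : ℝ) *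
      ((p.factorial : ℝ)⁻¹ * DD ((b ∘ (Equiv.Perm.decomposeFin.symm (k, τ))) 0) ξ
        (ex (fun t : Fin p => (b ∘ (Equiv.Perm.decomposeFin.symm (k, τ))) t.succ)) x)
      = (p.factorial : ℝ)⁻¹ * ((-1 : ℝ) ^ (k : ℕ) *
        DD (b k) ξ (ex (fun t : Fin p => b (k.succAbove t))) x) := by
    intro τ
    simp only [Function.comp, Equiv.Perm.decomposeFin_symm_apply_zero,
      Equiv.Perm.decomposeFin_symm_apply_succ, Equiv.Perm.decomposeFin.symm_sign]
    refine Fin.cases ?_ (fun i => ?_) k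
    · have := anti_perm (anti_DD ha (b 0)) (dep_DD hξ (b 0)) x τ (fun t => b t.succ)
      simp only [Function.comp_def] at this
      simp only [Equiv.swap_self, Equiv.refl_apply, this, if_true, one_mul, Fin.val_zero, pow_zero,
        Fin.succAbove_zero]
      linear_combination ((p.factorial : ℝ)⁻¹ * DD (b 0) ξ (ex fun t => b t.succ) x) * sgn_sq τ
    · have := anti_perm (anti_DD ha (b i.succ)) (dep_DD hξ (b i.succ)) x (i.cycleRange * τ)
        (fun t => b (i.succ.succAbove t))
      simp only [Function.comp_def, Equiv.Perm.mul_apply, Fin.succAbove_cycleRange,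
        Equiv.Perm.sign_mul, Fin.sign_cycleRange] at this
      simp only [this, if_neg (Fin.succ_ne_zero i), Fin.val_succ, pow_succ]
      push_cast
      linear_combination (- (p.factorial : ℝ)⁻¹ * (-1)^(i:ℕ) * DD (b i.succ) ξ
        (ex fun t => b (i.succ.succAbove t)) x) * sgn_sq τ
  rw [Finset.sum_congr rfl (fun τ _ => hT τ)]
  simp [Fintype.card_perm]
  field_simp

lemma anti_extd {p : ℕ} {ξ : Form n} (hξ : DependsOn p ξ) (ha : IsAnti p ξ) :
    IsAnti (p + 1) (extd p ξ) :=
  anti_of_alt (dep_extd hξ) (fun (x : Pt n) (c : Fin (p+1) → Fin n) => (p.factorial : ℝ)⁻¹ *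
          DD (c 0) ξ (ex (fun t : Fin p => c t.succ)) x) (extd_ex hξ ha)

/-- exterior derivative on the exterior algebra side -/
noncomputable def dP (p : ℕ) (ξ : Form n) (x : Pt n) : EA n := ∑ k, eg k * Ph p (DD k ξ) x

lemma Ph_extd {p : ℕ} {ξ : Form n} (hξ : DependsOn p ξ) (ha : IsAnti p ξ) (x : Pt n) :
    Ph (p+1) (extd p ξ) x = dP p ξ x := by
  unfold dP
  unfold Ph
  rw [Finset.sum_congr rfl (fun b _ => by rw [extd_ex hξ ha b])]
  rw [sum_alt ((fun (x : Pt n) (c : Fin (p+1) → Fin n) => (p.factorial : ℝ)⁻¹ *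
          DD (c 0) ξ (ex (fun t : Fin p => c t.succ)) x) x), smul_smul,
            inv_mul_cancel₀ (by positivity), one_smul]
  rw [← Fintype.sum_equiv (Fin.consEquiv (fun _ : Fin (p+1) => Fin n))
    (fun kb : Fin n × (Fin p → Fin n) => ((p.factorial : ℝ)⁻¹ * DD kb.1 ξ (ex kb.2) x) •
      (eg kb.1 * eb kb.2)) _ (by
      rintro ⟨k, b⟩
      simp only [Fin.consEquiv, Equiv.coe_fn_mk, eb_cons]
      rfl)]
  rw [Fintype.sum_prod_type]
  refine Finset.sum_congr rfl fun k _ => ?_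
  rw [mul_smul_comm, Finset.mul_sum, Finset.smul_sum]
  refine Finset.sum_congr rfl fun b _ => ?_
  rw [mul_smul_comm, smul_smul]

/-- a one-form from coefficients -/
noncomputable def one (g : Fin n → ℝ) : EA n := ∑ j, g j • eg j

lemma Ph_gt {p : ℕ} {ξ : Form n} (hξ : DependsOn p ξ) (ha : IsAnti p ξ)
    (G : Fin n → Fin n → Pt n → ℝ) (x : Pt n) :
    Ph p (gt G p ξ) x = ∑ m, one (fun j => G m j x) * ct m (Ph p ξ x) := by
  simp_rw [ct_Ph ha]
  rcases p with _ | p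
  · have : gt G 0 ξ = 0 := by funext a x; simp [gt]
    rw [this]
    simp [intr, Ph]
  have hupd : ∀ (b : Fin (p+1) → Fin n) (k : Fin (p+1)) (m : Fin n),
      ξ (fun t => if t = (k : ℕ) then m else ex b t) = ξ (ex (Function.update b k m)) := by
    intro b k m
    apply hξ
    intro t ht
    rw [ex_lt _ ht, ex_lt _ ht]
    simp [Function.update_apply, Fin.ext_iff]
  have hk : ∀ k : Fin (p+1), ∑ b : Fin (p+1) → Fin n,
      (∑ m, G m (ex b k) x * ξ (fun t => if t = (k : ℕ) then m else ex b t) x) • eb b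
      = ∑ b : Fin (p+1) → Fin n, (∑ m, G m (b 0) x * ξ (ex (Function.update b 0 m)) x) • eb b := by
    intro k
    refine Fintype.sum_equiv (Equiv.arrowCongr (Equiv.swap 0 k) (Equiv.refl _)) _ _ ?_
    intro b
    have e1 : (Equiv.arrowCongr (Equiv.swap 0 k) (Equiv.refl (Fin n))) b = b ∘ Equiv.swap 0 k := by
      ext t; simp [Equiv.arrowCongr]
    rw [e1, eb_perm, smul_smul, Finset.sum_mul]
    congr 1
    refine Finset.sum_congr rfl fun m _ => ?_
    rw [hupd, ex_lt b k.2]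
    have e2 : Function.update (b ∘ Equiv.swap 0 k) 0 m
        = (Function.update b k m) ∘ Equiv.swap 0 k := by
      funext t
      simp only [Function.comp, Function.update_apply, Equiv.swap_apply_eq_iff, 
        Equiv.swap_apply_right]
    rw [e2, anti_perm ha hξ]
    simp only [Function.comp, Equiv.swap_apply_left, Fin.eta]
    linear_combination (-G m (b k) x * ξ (ex (Function.update b k m)) x) * sgn_sq (Equiv.swap 0 k)
  have h0 : ∑ b : Fin (p+1) → Fin n, (∑ m, G m (b 0) x * ξ (ex (Function.update b 0 m)) x) • eb b
      = (p.factorial : ℝ) • ∑ m, one (fun j => G m j x) * Ph p (intr (p+1) m ξ) x := by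
    rw [← Fintype.sum_equiv (Fin.consEquiv (fun _ : Fin (p+1) => Fin n))
      (fun kb : Fin n × (Fin p → Fin n) => (∑ m, G m kb.1 x * intr (p+1) m ξ (ex kb.2) x) •
        (eg kb.1 * eb kb.2)) _ (by
        rintro ⟨k, b⟩
        simp only [Fin.consEquiv, Equiv.coe_fn_mk, eb_cons, Fin.cons_zero, Fin.update_cons_zero]
        congr 1
        refine Finset.sum_congr rfl fun m _ => ?_
        congr 1
        simp only [intr, Nat.add_eq_zero_iff, one_ne_zero, and_false, if_false]
        congr 1
        ext t
        rcases t with _ | t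
        · simp [ex]
        · by_cases h : t < p
          · simp only [ex]
            rw [dif_pos (show t + 1 < p + 1 by omega)]
            simp [h]
            rfl
          · simp [ex, h])]
    rw [Fintype.sum_prod_type]
    simp only [one, Ph, Finset.sum_smul, Finset.sum_mul, Finset.mul_sum, Finset.smul_sum]
    refine (Finset.sum_congr rfl (fun k _ => Finset.sum_comm)).trans ?_
    rw [Finset.sum_comm]
    refine Finset.sum_congr rfl fun m _ => ?_
    rw [Finset.sum_comm]
    refine Finset.sum_congr rfl fun b _ => ?_
    refine Finset.sum_congr rfl fun k _ => ?_
    simp only [smul_mul_assoc, mul_smul_comm, smul_smul]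
    congr 1
    field_simp
  unfold Ph at *
  simp only [gt, Finset.sum_smul] at *
  rw [Finset.sum_comm]
  rw [Finset.sum_congr rfl (fun k _ => hk k), Finset.sum_const, h0]
  rw [Finset.card_univ, Fintype.card_fin, ← Nat.cast_smul_eq_nsmul ℝ, smul_smul, smul_smul]
  rw [Nat.factorial_succ]
  push_cast
  rw [mul_assoc, inv_mul_cancel₀ (by positivity), one_smul]
  rfl

/-- homogeneity -/
def Hom (p : ℕ) (X : EA n) : Prop :=
  X ∈ (LinearMap.range (ExteriorAlgebra.ι ℝ : (Fin n → ℝ) →ₗ[ℝ] EA n)) ^ p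

lemma Hom_Ph (p : ℕ) (ξ : Form n) (x : Pt n) : Hom p (Ph p ξ x) := by
  unfold Hom Ph
  refine Submodule.smul_mem _ _ (Submodule.sum_mem _ fun b _ => Submodule.smul_mem _ _ ?_)
  exact ExteriorAlgebra.ιMulti_range ℝ p (Set.mem_range_self _)

lemma ct_mul {p : ℕ} {X : EA n} (hX : Hom p X) (m : Fin n) (Y : EA n) :
    ct m (X * Y) = ct m X * Y + (-1 : ℝ) ^ p • (X * ct m Y) := by
  unfold Hom at hX
  induction hX using Submodule.pow_induction_on_left' with
  | algebraMap r =>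
    have h1 : ct m (algebraMap ℝ (EA n) r) = 0 :=
      CliffordAlgebra.contractLeft_algebraMap (Q := (0 : QuadraticForm ℝ (Fin n → ℝ)))
        (d := LinearMap.proj m) r
    rw [h1]
    simp [← Algebra.smul_def]
  | add x y i hx hy h1 h2 => 
    simp only [add_mul, map_add, h1, h2, smul_add]; abel
  | mem_mul v hv i x hx h =>
    obtain ⟨v, rfl⟩ := hv
    have h1 : ∀ Z : EA n, ct m (ExteriorAlgebra.ι ℝ v * Z)
        = v m • Z - ExteriorAlgebra.ι ℝ v * ct m Z := fun Z =>
      CliffordAlgebra.contractLeft_ι_mul (Q := (0 : QuadraticForm ℝ (Fin n → ℝ)))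
        (d := LinearMap.proj m) v Z
    rw [mul_assoc, h1, h1, h]
    simp only [mul_add, sub_mul, mul_assoc, smul_mul_assoc, mul_smul_comm, Nat.succ_eq_add_one,
      pow_succ, mul_neg, mul_one, neg_smul]
    abel

lemma ι_comm {p : ℕ} {X : EA n} (hX : Hom p X) (v : Fin n → ℝ) :
    ExteriorAlgebra.ι ℝ v * X = (-1 : ℝ) ^ p • (X * ExteriorAlgebra.ι ℝ v) := by
  unfold Hom at hX
  induction hX using Submodule.pow_induction_on_left' with
  | algebraMap r => simp [Algebra.commutes]
  | add x y i hx hy h1 h2 => simp only [add_mul, mul_add, h1, h2, smul_add]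
  | mem_mul w hw i x hx h =>
    obtain ⟨w, rfl⟩ := hw
    have h1 : (ExteriorAlgebra.ι ℝ v : EA n) * ExteriorAlgebra.ι ℝ w
        = - (ExteriorAlgebra.ι ℝ w * ExteriorAlgebra.ι ℝ v) :=
      eq_neg_of_add_eq_zero_left (ExteriorAlgebra.ι_add_mul_swap v w)
    rw [← mul_assoc, h1, neg_mul, mul_assoc, h]
    simp only [mul_smul_comm, mul_assoc, Nat.succ_eq_add_one,
      pow_succ, mul_neg, mul_one, neg_smul]

lemma eg_comm {p : ℕ} {X : EA n} (hX : Hom p X) (k : Fin n) :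
    eg k * X = (-1 : ℝ) ^ p • (X * eg k) := ι_comm hX _

lemma one_comm {p : ℕ} {X : EA n} (hX : Hom p X) (g : Fin n → ℝ) :
    one g * X = (-1 : ℝ) ^ p • (X * one g) := by
  simp only [one, Finset.sum_mul, Finset.mul_sum, Finset.smul_sum, smul_mul_assoc, eg_comm hX,
    mul_smul_comm]
  refine Finset.sum_congr rfl fun m _ => ?_
  rw [smul_comm]

lemma two_comm {H : EA n} (hH : Hom 2 H) (X : EA n) : H * X = X * H := by
  induction X using ExteriorAlgebra.induction with
  | algebraMap r => rw [Algebra.commutes]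
  | ι v => rw [ι_comm hH]; simp
  | mul a b ha hb => rw [← mul_assoc, ha, mul_assoc, hb, mul_assoc]
  | add a b ha hb => rw [mul_add, add_mul, ha, hb]

lemma Hom_one (g : Fin n → ℝ) : Hom 1 (one g) := by
  unfold Hom one
  rw [pow_one]
  exact Submodule.sum_mem _ fun b _ => Submodule.smul_mem _ _ ⟨_, rfl⟩

end

lemma sm_diff {U : Set (Pt n)} (hU : IsOpen U) {f : Pt n → ℝ}
    (hf : ContDiffOn ℝ (⊤ : ℕ∞) f U) {x : Pt n} (hx : x ∈ U) : DifferentiableAt ℝ f x :=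
  (hf.differentiableOn (by simp)).differentiableAt (hU.mem_nhds hx)

lemma sm_pd {U : Set (Pt n)} (hU : IsOpen U) {f : Pt n → ℝ}
    (hf : ContDiffOn ℝ (⊤ : ℕ∞) f U) (k : Fin n) : ContDiffOn ℝ (⊤ : ℕ∞) (pd k f) U := by
  unfold pd
  exact (hf.fderiv_of_isOpen hU (m := (⊤ : ℕ∞)) (by simp)).clm_apply contDiffOn_const

lemma sm_DD {U : Set (Pt n)} (hU : IsOpen U) {ξ : Form n} (h : SmoothOn U ξ) (k : Fin n) :
    SmoothOn U (DD k ξ) := fun a => sm_pd hU (h a) k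

lemma sm_add {U : Set (Pt n)} {ξ η : Form n} (h : SmoothOn U ξ) (h' : SmoothOn U η) :
    SmoothOn U (ξ + η) := fun a => (h a).add (h' a)

lemma sm_neg {U : Set (Pt n)} {ξ : Form n} (h : SmoothOn U ξ) :
    SmoothOn U (-ξ) := fun a => (h a).neg

lemma sm_zero {U : Set (Pt n)} : SmoothOn U (0 : Form n) := fun _ => contDiffOn_const

lemma sm_smul {U : Set (Pt n)} {ξ : Form n} (c : ℝ) (h : SmoothOn U ξ) :
    SmoothOn U (c • ξ) := fun a => (contDiffOn_const (c := c)).mul (h a)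

lemma sm_fmul {U : Set (Pt n)} {f : Pt n → ℝ} {ξ : Form n}
    (hf : ContDiffOn ℝ (⊤ : ℕ∞) f U) (h : SmoothOn U ξ) :
    SmoothOn U (fmul f ξ) := fun a => hf.mul (h a)

lemma sm_sum {ι : Type*} {s : Finset ι} {U : Set (Pt n)} {f : ι → Form n}
    (h : ∀ i, SmoothOn U (f i)) : SmoothOn U (∑ i ∈ s, f i) := by
  intro a
  have : (∑ i ∈ s, f i) a = fun x => ∑ i ∈ s, f i a x := by
    funext x; simp
  rw [this]
  exact ContDiffOn.sum fun i _ => h i a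

lemma sm_intr {U : Set (Pt n)} {p : ℕ} {ξ : Form n} (h : SmoothOn U ξ) (m : Fin n) :
    SmoothOn U (intr p m ξ) := by
  intro a
  unfold intr
  split_ifs
  · exact contDiffOn_const
  · exact h _

lemma sm_wedge {U : Set (Pt n)} {p q : ℕ} {ξ η : Form n} (h : SmoothOn U ξ) (h' : SmoothOn U η) :
    SmoothOn U (wedge p q ξ η) := by
  intro a
  unfold wedge
  exact contDiffOn_const.mul (ContDiffOn.sum fun σ _ => (contDiffOn_const.mul (h _)).mul (h' _))

lemma sm_gt {U : Set (Pt n)} {p : ℕ} {ξ : Form n} {G : Fin n → Fin n → Pt n → ℝ}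
    (hG : ∀ m j, ContDiffOn ℝ (⊤ : ℕ∞) (G m j) U) (h : SmoothOn U ξ) :
    SmoothOn U (gt G p ξ) := by
  intro a
  unfold gt
  exact ContDiffOn.sum fun k _ => ContDiffOn.sum fun m _ => (hG _ _).mul (h _)

lemma sm_nabla {U : Set (Pt n)} (hU : IsOpen U) {p : ℕ} {ξ : Form n}
    {Γ : Fin n → Fin n → Fin n → Pt n → ℝ}
    (hG : ∀ i j k, ContDiffOn ℝ (⊤ : ℕ∞) (Γ i j k) U) (h : SmoothOn U ξ) (i : Fin n) :
    SmoothOn U (nabla Γ i p ξ) := by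
  rw [nabla_eq]
  exact sm_add (sm_DD hU h i) (sm_neg (sm_gt (fun m j => hG _ _ _) h))

lemma dep_nabla {p : ℕ} {ξ : Form n} (h : DependsOn p ξ) (Γ : Fin n → Fin n → Fin n → Pt n → ℝ)
    (i : Fin n) : DependsOn p (nabla Γ i p ξ) := by
  rw [nabla_eq]
  exact dep_add (dep_DD h i) (dep_neg (dep_gt h _))

lemma sm_extd {U : Set (Pt n)} (hU : IsOpen U) {p : ℕ} {ξ : Form n} (h : SmoothOn U ξ) :
    SmoothOn U (extd p ξ) := by
  intro a
  unfold extd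
  exact ContDiffOn.sum fun k _ => contDiffOn_const.mul (sm_pd hU (h _) _)

lemma pd_mul {f g : Pt n → ℝ} {x : Pt n} (hf : DifferentiableAt ℝ f x)
    (hg : DifferentiableAt ℝ g x) (k : Fin n) :
    pd k (fun y => f y * g y) x = pd k f x * g x + f x * pd k g x := by
  unfold pd
  rw [fderiv_fun_mul hf hg]
  simp [mul_comm]
  ring

lemma pd_cmul {g : Pt n → ℝ} {x : Pt n} (c : ℝ)
    (hg : DifferentiableAt ℝ g x) (k : Fin n) :
    pd k (fun y => c * g y) x = c * pd k g x := by
  unfold pd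
  rw [fderiv_const_mul hg]
  simp

lemma pd_sum {ι : Type*} {s : Finset ι} {f : ι → Pt n → ℝ} {x : Pt n}
    (hf : ∀ i, DifferentiableAt ℝ (f i) x) (k : Fin n) :
    pd k (fun y => ∑ i ∈ s, f i y) x = ∑ i ∈ s, pd k (f i) x := by
  unfold pd
  rw [fderiv_fun_sum (fun i _ => hf i)]
  simp

lemma pd_congr {U : Set (Pt n)} (hU : IsOpen U) {f g : Pt n → ℝ} (h : ∀ y ∈ U, f y = g y)
    {x : Pt n} (hx : x ∈ U) (k : Fin n) : pd k f x = pd k g x := by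
  unfold pd
  have : f =ᶠ[nhds x] g := Filter.eventuallyEq_of_mem (hU.mem_nhds hx) h
  rw [this.fderiv_eq]

lemma pd_comm {U : Set (Pt n)} (hU : IsOpen U) {f : Pt n → ℝ}
    (hf : ContDiffOn ℝ (⊤ : ℕ∞) f U) {x : Pt n} (hx : x ∈ U) (k l : Fin n) :
    pd k (pd l f) x = pd l (pd k f) x := by
  have hs : IsSymmSndFDerivAt ℝ f x :=
    ((hf.contDiffAt (hU.mem_nhds hx)).isSymmSndFDerivAt (by
      simp only [minSmoothness_of_isRCLikeNormedField]; exact WithTop.coe_le_coe.2 (le_top : (2 : ℕ∞) ≤ ⊤)))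
  have hd : DifferentiableAt ℝ (fderiv ℝ f) x :=
    ((hf.fderiv_of_isOpen hU (m := (⊤ : ℕ∞)) (by simp)).differentiableOn
      (by simp)).differentiableAt (hU.mem_nhds hx)
  have key : ∀ k l : Fin n, pd k (pd l f) x
      = fderiv ℝ (fderiv ℝ f) x (Pi.single k 1) (Pi.single l 1) := by
    intro k l
    unfold pd
    rw [fderiv_clm_apply hd (differentiableAt_const _)]
    simp
  rw [key, key]
  exact hs _ _

lemma DD_add {U : Set (Pt n)} (hU : IsOpen U) {ξ η : Form n} (h : SmoothOn U ξ)
    (h' : SmoothOn U η) {x : Pt n} (hx : x ∈ U) (k : Fin n) (a : ℕ → Fin n) :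
    DD k (ξ + η) a x = (DD k ξ + DD k η) a x := by
  simp only [DD, pd, Pi.add_apply]
  rw [fderiv_add (sm_diff hU (h a) hx) (sm_diff hU (h' a) hx)]
  rfl

lemma DD_neg {ξ : Form n} {x : Pt n} (k : Fin n) (a : ℕ → Fin n) :
    DD k (-ξ) a x = (- DD k ξ) a x := by
  simp only [DD, pd, Pi.neg_apply]
  rw [fderiv_neg]
  rfl

lemma DD_smul {U : Set (Pt n)} (hU : IsOpen U) {ξ : Form n} (c : ℝ) (h : SmoothOn U ξ)
    {x : Pt n} (hx : x ∈ U) (k : Fin n) (a : ℕ → Fin n) :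
    DD k (c • ξ) a x = (c • DD k ξ) a x := 
  pd_cmul c (sm_diff hU (h a) hx) k

lemma DD_sum {ι : Type*} {s : Finset ι} {U : Set (Pt n)} (hU : IsOpen U) {f : ι → Form n}
    (h : ∀ i, SmoothOn U (f i)) {x : Pt n} (hx : x ∈ U) (k : Fin n) (a : ℕ → Fin n) :
    DD k (∑ i ∈ s, f i) a x = (∑ i ∈ s, DD k (f i)) a x := by
  simp only [Finset.sum_apply, DD]
  rw [← pd_sum (fun i => sm_diff hU (h i a) hx)]
  congr 1
  funext y
  simp

lemma DD_fmul {U : Set (Pt n)} (hU : IsOpen U) {f : Pt n → ℝ} {ξ : Form n}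
    (hf : ContDiffOn ℝ (⊤ : ℕ∞) f U) (h : SmoothOn U ξ)
    {x : Pt n} (hx : x ∈ U) (k : Fin n) (a : ℕ → Fin n) :
    DD k (fmul f ξ) a x = (fmul (pd k f) ξ + fmul f (DD k ξ)) a x :=
  pd_mul (sm_diff hU hf hx) (sm_diff hU (h a) hx) k

lemma DD_wedge {U : Set (Pt n)} (hU : IsOpen U) {p q : ℕ} {ξ η : Form n} (h : SmoothOn U ξ)
    (h' : SmoothOn U η) {x : Pt n} (hx : x ∈ U) (k : Fin n) (a : ℕ → Fin n) :
    DD k (wedge p q ξ η) a x = (wedge p q (DD k ξ) η + wedge p q ξ (DD k η)) a x := by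
  have d1 := fun a => sm_diff hU (h a) hx
  have d2 := fun a => sm_diff hU (h' a) hx
  have e : DD k (wedge p q ξ η) a x = pd k (fun x =>
      ((p.factorial * q.factorial : ℕ) : ℝ)⁻¹ *
    ∑ σ : Equiv.Perm (Fin (p + q)),
      ((Equiv.Perm.sign σ : ℤ) : ℝ) *
        ξ (fun t => if h : t < p then a ((σ ⟨t, by omega⟩ : Fin (p + q)) : ℕ) else a t) x *
        η (fun t => if h : t < q then a ((σ ⟨p + t, by omega⟩ : Fin (p + q)) : ℕ) else a t) x) x :=
    rfl
  rw [e]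
  simp only [DD, wedge, Pi.add_apply]
  rw [pd_cmul, pd_sum, ← mul_add, ← Finset.sum_add_distrib]
  · congr 1
    refine Finset.sum_congr rfl fun σ _ => ?_
    rw [pd_mul ((differentiableAt_const _).fun_mul (d1 _)) (d2 _), pd_cmul _ (d1 _)]
  · exact fun σ => ((differentiableAt_const _).fun_mul (d1 _)).fun_mul (d2 _)
  · exact DifferentiableAt.fun_sum fun σ _ => ((differentiableAt_const _).fun_mul (d1 _)).fun_mul (d2 _)

lemma DD_gt {U : Set (Pt n)} (hU : IsOpen U) {p : ℕ} {ξ : Form n} {G : Fin n → Fin n → Pt n → ℝ}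
    (hG : ∀ m j, ContDiffOn ℝ (⊤ : ℕ∞) (G m j) U) (h : SmoothOn U ξ)
    {x : Pt n} (hx : x ∈ U) (k : Fin n) (a : ℕ → Fin n) :
    DD k (gt G p ξ) a x = (gt (fun m j => pd k (G m j)) p ξ + gt G p (DD k ξ)) a x := by
  have d1 := fun a => sm_diff hU (h a) hx
  have d2 := fun m j => sm_diff hU (hG m j) hx
  have e : DD k (gt G p ξ) a x = pd k (fun x =>
      ∑ l : Fin p, ∑ m, G m (a (l : ℕ)) x * ξ (fun t => if t = (l : ℕ) then m else a t) x) x := rfl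
  rw [e]
  simp only [DD, gt, Pi.add_apply]
  rw [pd_sum (fun i => DifferentiableAt.fun_sum fun m _ => (d2 _ _).fun_mul (d1 _)),
    ← Finset.sum_add_distrib]
  refine Finset.sum_congr rfl fun l _ => ?_
  rw [pd_sum (fun m => (d2 _ _).fun_mul (d1 _)), ← Finset.sum_add_distrib]
  refine Finset.sum_congr rfl fun m _ => ?_
  rw [pd_mul (d2 _ _) (d1 _)]

lemma DD_intr {p : ℕ} {ξ : Form n} (m k : Fin n) : DD k (intr p m ξ) = intr p m (DD k ξ) := by
  funext a x
  unfold intr DD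
  split_ifs
  · simp [pd]
  · rfl

lemma DD_comm {U : Set (Pt n)} (hU : IsOpen U) {ξ : Form n} (h : SmoothOn U ξ)
    {x : Pt n} (hx : x ∈ U) (k l : Fin n) (a : ℕ → Fin n) :
    DD k (DD l ξ) a x = DD l (DD k ξ) a x := pd_comm hU (h a) hx k l

lemma DD_extd {U : Set (Pt n)} (hU : IsOpen U) {p : ℕ} {ξ : Form n} (h : SmoothOn U ξ)
    {x : Pt n} (hx : x ∈ U) (k : Fin n) (a : ℕ → Fin n) :
    DD k (extd p ξ) a x = extd p (DD k ξ) a x := by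
  have e : DD k (extd p ξ) a x = pd k (fun x => ∑ k : Fin (p + 1),
    (-1 : ℝ) ^ (k : ℕ) *
      pd (a (k : ℕ)) (ξ (fun t => if t < (k : ℕ) then a t else a (t + 1))) x) x := rfl
  rw [e]
  simp only [extd]
  have d1 := fun l a => sm_diff hU (sm_pd hU (h a) l) hx
  rw [pd_sum (fun i => (differentiableAt_const _).fun_mul (d1 _ _))]
  refine Finset.sum_congr rfl fun l _ => ?_
  rw [pd_cmul _ (d1 _ _)]
  rw [pd_comm hU (h _) hx]
  rfl

lemma DD_congr {U : Set (Pt n)} (hU : IsOpen U) {ξ η : Form n} (h : ∀ a, ∀ y ∈ U, ξ a y = η a y)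
    {x : Pt n} (hx : x ∈ U) (k : Fin n) (a : ℕ → Fin n) : DD k ξ a x = DD k η a x :=
  pd_congr hU (h a) hx k

section
variable [NeZero n]

lemma dP_congr {U : Set (Pt n)} (hU : IsOpen U) (p : ℕ) {ξ η : Form n}
    (h : ∀ a, ∀ y ∈ U, ξ a y = η a y) {x : Pt n} (hx : x ∈ U) : dP p ξ x = dP p η x := by
  unfold dP
  refine Finset.sum_congr rfl fun k _ => ?_
  rw [Ph_congr p (DD_congr hU h hx k)]

lemma dP_add {U : Set (Pt n)} (hU : IsOpen U) (p : ℕ) {ξ η : Form n} (h : SmoothOn U ξ)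
    (h' : SmoothOn U η) {x : Pt n} (hx : x ∈ U) : dP p (ξ + η) x = dP p ξ x + dP p η x := by
  unfold dP
  rw [← Finset.sum_add_distrib]
  refine Finset.sum_congr rfl fun k _ => ?_
  rw [Ph_congr p (DD_add hU h h' hx k), Ph_add, mul_add]

lemma dP_zero (p : ℕ) (x : Pt n) : dP p (0 : Form n) x = 0 := by
  unfold dP
  refine Finset.sum_eq_zero fun k _ => ?_
  have : DD k (0 : Form n) = 0 := by
    funext a x
    change fderiv ℝ (0 : Pt n → ℝ) x _ = 0
    simp
  rw [this, Ph_zero, mul_zero]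

lemma dP_neg (p : ℕ) (ξ : Form n) (x : Pt n) : dP p (-ξ) x = - dP p ξ x := by
  unfold dP
  rw [← Finset.sum_neg_distrib]
  refine Finset.sum_congr rfl fun k _ => ?_
  rw [Ph_congr p (DD_neg k), Ph_neg, mul_neg]

lemma dP_smul {U : Set (Pt n)} (hU : IsOpen U) (p : ℕ) (c : ℝ) {ξ : Form n} (h : SmoothOn U ξ)
    {x : Pt n} (hx : x ∈ U) : dP p (c • ξ) x = c • dP p ξ x := by
  unfold dP
  rw [Finset.smul_sum]
  refine Finset.sum_congr rfl fun k _ => ?_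
  rw [Ph_congr p (DD_smul hU c h hx k), Ph_smul, mul_smul_comm]

lemma dP_sum {ι : Type*} {s : Finset ι} {U : Set (Pt n)} (hU : IsOpen U) (p : ℕ) {f : ι → Form n}
    (h : ∀ i, SmoothOn U (f i)) {x : Pt n} (hx : x ∈ U) :
    dP p (∑ i ∈ s, f i) x = ∑ i ∈ s, dP p (f i) x := by
  unfold dP
  rw [Finset.sum_comm]
  refine Finset.sum_congr rfl fun k _ => ?_
  rw [Ph_congr p (DD_sum hU h hx k), Ph_sum, Finset.mul_sum]

lemma dP_fmul {U : Set (Pt n)} (hU : IsOpen U) (p : ℕ) {f : Pt n → ℝ} {ξ : Form n}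
    (hf : ContDiffOn ℝ (⊤ : ℕ∞) f U) (h : SmoothOn U ξ) {x : Pt n} (hx : x ∈ U) :
    dP p (fmul f ξ) x = one (fun k => pd k f x) * Ph p ξ x + f x • dP p ξ x := by
  unfold dP one
  rw [Finset.smul_sum, Finset.sum_mul, ← Finset.sum_add_distrib]
  refine Finset.sum_congr rfl fun k _ => ?_
  rw [Ph_congr p (DD_fmul hU hf h hx k), Ph_add, Ph_fmul, Ph_fmul, mul_add, mul_smul_comm,
    mul_smul_comm, smul_mul_assoc]

lemma dP_wedge {U : Set (Pt n)} (hU : IsOpen U) {p q : ℕ} {ξ η : Form n} (hd : DependsOn p ξ)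
    (hd' : DependsOn q η) (h : SmoothOn U ξ) (h' : SmoothOn U η) {x : Pt n} (hx : x ∈ U) :
    dP (p + q) (wedge p q ξ η) x
      = dP p ξ x * Ph q η x + (-1 : ℝ) ^ p • (Ph p ξ x * dP q η x) := by
  unfold dP
  rw [Finset.sum_mul, Finset.mul_sum, Finset.smul_sum, ← Finset.sum_add_distrib]
  refine Finset.sum_congr rfl fun k _ => ?_
  rw [Ph_congr _ (DD_wedge hU h h' hx k), Ph_add, Ph_wedge (dep_DD hd k) hd',
    Ph_wedge hd (dep_DD hd' k), mul_add, ← mul_assoc, ← mul_assoc, ← mul_assoc,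
    eg_comm (Hom_Ph p ξ x), smul_mul_assoc]

lemma dP_extd {U : Set (Pt n)} (hU : IsOpen U) {p : ℕ} {ξ : Form n} (hd : DependsOn p ξ)
    (ha : IsAnti p ξ) (h : SmoothOn U ξ) {x : Pt n} (hx : x ∈ U) :
    dP (p + 1) (extd p ξ) x = 0 := by
  have e1 : dP (p+1) (extd p ξ) x = ∑ k, ∑ l, eg k * (eg l * Ph p (DD l (DD k ξ)) x) := by
    unfold dP
    refine Finset.sum_congr rfl fun k _ => ?_
    rw [Ph_congr _ (DD_extd hU h hx k), Ph_extd (dep_DD hd k) (anti_DD ha k), dP, Finset.mul_sum]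
  have e2 : dP (p+1) (extd p ξ) x = - dP (p+1) (extd p ξ) x := by
    conv_lhs => rw [e1, Finset.sum_comm]
    rw [e1, ← Finset.sum_neg_distrib]
    refine Finset.sum_congr rfl fun k _ => ?_
    rw [← Finset.sum_neg_distrib]
    refine Finset.sum_congr rfl fun l _ => ?_
    have h1 : (eg l : EA n) * eg k = - (eg k * eg l) :=
      eq_neg_of_add_eq_zero_left (ExteriorAlgebra.ι_add_mul_swap _ _)
    rw [← mul_assoc, h1, neg_mul, mul_assoc, Ph_congr p (DD_comm hU h hx k l)]
  have e3 : (2 : ℝ) • dP (p+1) (extd p ξ) x = 0 := by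
    rw [two_smul]
    nth_rewrite 1 [e2]
    simp
  exact (smul_eq_zero.mp e3).resolve_left two_ne_zero

lemma dP_intr {p : ℕ} {ξ : Form n} (ha : IsAnti p ξ) (i : Fin n) (x : Pt n) :
    dP (p - 1) (intr p i ξ) x = Ph p (DD i ξ) x - ct i (dP p ξ x) := by
  unfold dP
  simp only [map_sum, ct_eg_mul, DD_intr]
  rw [Finset.sum_sub_distrib]
  simp only [ct_Ph (anti_DD ha _)]
  simp

/-- connection one-forms `Γ^m_{ij} dx^j` -/
noncomputable def gam (Γ : Fin n → Fin n → Fin n → Pt n → ℝ) (x : Pt n) (i m : Fin n) : EA n :=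
  one (fun j => Γ m i j x)

/-- their exterior derivatives -/
noncomputable def dgam (Γ : Fin n → Fin n → Fin n → Pt n → ℝ) (x : Pt n) (i m : Fin n) : EA n :=
  ∑ k, eg k * one (fun j => pd k (Γ m i j) x)

/-- curvature two-forms -/
noncomputable def rho (Γ : Fin n → Fin n → Fin n → Pt n → ℝ) (x : Pt n) (i m : Fin n) : EA n :=
  dgam Γ x i m - ∑ l, gam Γ x i l * gam Γ x l m

lemma Ph_nabla {p : ℕ} {ξ : Form n} (hd : DependsOn p ξ) (ha : IsAnti p ξ)
    (Γ : Fin n → Fin n → Fin n → Pt n → ℝ) (i : Fin n) (x : Pt n) :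
    Ph p (nabla Γ i p ξ) x = Ph p (DD i ξ) x - ∑ m, gam Γ x i m * ct m (Ph p ξ x) := by
  rw [nabla_eq, Ph_add, Ph_neg, Ph_gt hd ha, sub_eq_add_neg]
  rfl

lemma dP_nabla {U : Set (Pt n)} (hU : IsOpen U) {p : ℕ} {ξ : Form n} (hd : DependsOn p ξ)
    (ha : IsAnti p ξ) (h : SmoothOn U ξ) {Γ : Fin n → Fin n → Fin n → Pt n → ℝ}
    (hG : ∀ i j k, ContDiffOn ℝ (⊤ : ℕ∞) (Γ i j k) U) (i : Fin n) {x : Pt n} (hx : x ∈ U) :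
    dP p (nabla Γ i p ξ) x = Ph (p+1) (nabla Γ i (p+1) (extd p ξ)) x
      + ∑ m, gam Γ x i m * Ph p (nabla Γ m p ξ) x - ∑ m, rho Γ x i m * ct m (Ph p ξ x) := by
  have hL : dP p (nabla Γ i p ξ) x = ∑ k, eg k * Ph p (DD k (DD i ξ)) x
      - ∑ m, dgam Γ x i m * ct m (Ph p ξ x)
      + ∑ m, ∑ k, gam Γ x i m * (eg k * ct m (Ph p (DD k ξ) x)) := by
    have hs := sm_DD hU h i
    have hs2 := sm_gt (p := p) (fun m j => hG m i j) h
    rw [nabla_eq, dP_add hU p hs (sm_neg hs2) hx, dP_neg]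
    have e1 : dP p (gt (fun m j => Γ m i j) p ξ) x =
        ∑ m, dgam Γ x i m * ct m (Ph p ξ x)
        - ∑ m, ∑ k, gam Γ x i m * (eg k * ct m (Ph p (DD k ξ) x)) := by
      rw [Finset.sum_comm (f := fun m k => gam Γ x i m * (eg k * ct m (Ph p (DD k ξ) x)))]
      simp only [dgam, Finset.sum_mul]
      rw [Finset.sum_comm]
      unfold dP
      rw [← Finset.sum_sub_distrib]
      refine Finset.sum_congr rfl fun k _ => ?_
      rw [Ph_congr p (DD_gt hU (fun m j => hG m i j) h hx k), Ph_add, Ph_gt hd ha,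
        Ph_gt (dep_DD hd k) (anti_DD ha k), mul_add, Finset.mul_sum, Finset.mul_sum,
        sub_eq_add_neg, ← Finset.sum_neg_distrib]
      congr 1
      · refine Finset.sum_congr rfl fun m _ => ?_
        rw [mul_assoc]
      · refine Finset.sum_congr rfl fun m _ => ?_
        rw [← mul_assoc, eg_comm (Hom_one _), ← mul_assoc]
        simp only [pow_one, neg_smul, one_smul, neg_mul]
        rfl
    rw [e1]
    simp only [dP]
    abel
  have hR : Ph (p+1) (nabla Γ i (p+1) (extd p ξ)) x = ∑ k, eg k * Ph p (DD k (DD i ξ)) x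
      - ∑ m, gam Γ x i m * Ph p (DD m ξ) x
      + ∑ m, ∑ k, gam Γ x i m * (eg k * ct m (Ph p (DD k ξ) x)) := by
    rw [Ph_nabla (dep_extd hd) (anti_extd hd ha), Ph_congr _ (DD_extd hU h hx i),
      Ph_extd (dep_DD hd i) (anti_DD ha i), Ph_extd hd ha, sub_add, dP]
    congr 1
    rw [← Finset.sum_sub_distrib]
    refine Finset.sum_congr rfl fun m _ => ?_
    rw [← Finset.mul_sum, ← mul_sub]
    congr 1
    simp only [dP, map_sum, ct_eg_mul]
    rw [Finset.sum_sub_distrib]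
    simp
  rw [hL, hR]
  simp only [Ph_nabla hd ha, rho, mul_sub, sub_mul, Finset.sum_sub_distrib, Finset.mul_sum,
    Finset.sum_mul, mul_assoc]
  rw [Finset.sum_comm (f := fun m l => gam Γ x i m * (gam Γ x m l * ct l (Ph p ξ x)))]
  abel

end

lemma dep_one (g : Fin n → Pt n → ℝ) : DependsOn 1 (fun a x => g (a 0) x : Form n) := by
  intro a b hab
  funext x
  simp only [hab 0 one_pos]

lemma anti_one (ξ : Form n) : IsAnti 1 ξ := by
  intro a i j hi hj hij x
  omega

lemma anti_null (ξ : Form n) : IsAnti 0 ξ := by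
  intro a i j hi hj hij x
  omega

/-- curvature two-forms as coefficient families -/
noncomputable def rhoF (Γ : Fin n → Fin n → Fin n → Pt n → ℝ) (s j : Fin n) : Form n :=
  extd 1 (GammaOne Γ j s) + -∑ k, wedge 1 1 (GammaOne Γ k s) (GammaOne Γ j k)

lemma dep_rhoF (Γ : Fin n → Fin n → Fin n → Pt n → ℝ) (s j : Fin n) : DependsOn 2 (rhoF Γ s j) :=
  dep_add (dep_extd (dep_one _)) (dep_neg (dep_sum fun _ => dep_wedge (dep_one _) (dep_one _)))

lemma sm_GammaOne {U : Set (Pt n)} {Γ : Fin n → Fin n → Fin n → Pt n → ℝ}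
    (hG : ∀ i j k, ContDiffOn ℝ (⊤ : ℕ∞) (Γ i j k) U) (i j : Fin n) : SmoothOn U (GammaOne Γ i j) :=
  fun _ => hG _ _ _

lemma sm_rhoF {U : Set (Pt n)} (hU : IsOpen U) {Γ : Fin n → Fin n → Fin n → Pt n → ℝ}
    (hG : ∀ i j k, ContDiffOn ℝ (⊤ : ℕ∞) (Γ i j k) U) (s j : Fin n) : SmoothOn U (rhoF Γ s j) :=
  sm_add (sm_extd hU (sm_GammaOne hG _ _))
    (sm_neg (sm_sum fun _ => sm_wedge (sm_GammaOne hG _ _) (sm_GammaOne hG _ _)))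

lemma wedge11 (g h : Fin n → Pt n → ℝ) (a : ℕ → Fin n) (x : Pt n) :
    wedge 1 1 (fun a x => g (a 0) x) (fun a x => h (a 0) x) a x
      = g (a 0) x * h (a 1) x - g (a 1) x * h (a 0) x := by
  unfold wedge
  rw [show (Finset.univ : Finset (Equiv.Perm (Fin (1+1)))) = {1, Equiv.swap 0 1} by decide]
  rw [Finset.sum_pair (by decide)]
  have hs : Equiv.Perm.sign (Equiv.swap (0 : Fin (1+1)) 1) = -1 := by decide
  rw [hs]
  simp
  ring

lemma rhoF_apply (Γ : Fin n → Fin n → Fin n → Pt n → ℝ) (s j : Fin n) (a : ℕ → Fin n) (x : Pt n) :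
    rhoF Γ s j a x = pd (a 0) (Γ j s (a 1)) x - pd (a 1) (Γ j s (a 0)) x
      - ∑ k, (Γ k s (a 0) x * Γ j k (a 1) x - Γ k s (a 1) x * Γ j k (a 0) x) := by
  have : ∀ k, wedge 1 1 (GammaOne Γ k s) (GammaOne Γ j k) a x
      = Γ k s (a 0) x * Γ j k (a 1) x - Γ k s (a 1) x * Γ j k (a 0) x :=
    fun k => wedge11 (Γ k s) (Γ j k) a x
  simp only [rhoF, Pi.add_apply, Pi.neg_apply, Finset.sum_apply, this]
  unfold extd
  rw [Fin.sum_univ_two]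
  have hg : ∀ f, GammaOne Γ j s f = Γ j s (f 0) := fun _ => rfl
  simp [hg]
  ring

lemma Hform_eq {U : Set (Pt n)} (hU : IsOpen U) (ω : Fin n → Fin n → Pt n → ℝ)
    {Γ : Fin n → Fin n → Fin n → Pt n → ℝ}
    (hG : ∀ i j k, ContDiffOn ℝ (⊤ : ℕ∞) (Γ i j k) U) (i j : Fin n) (a : ℕ → Fin n) (x : Pt n)
    (hx : x ∈ U) :
    Hform ω Γ i j a x = ((-(1/2) : ℝ) • ∑ s, fmul (ω i s) (rhoF Γ s j)) a x := by
  have hT : ∀ j b c s, pd s (Tor Γ j b c) x = pd s (Γ j b c) x - pd s (Γ j c b) x := by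
    intro j b c s
    unfold pd
    rw [show Tor Γ j b c = fun y => Γ j b c y - Γ j c b y from rfl,
      fderiv_fun_sub (sm_diff hU (hG _ _ _) hx) (sm_diff hU (hG _ _ _) hx)]
    rfl
  simp only [Pi.smul_apply, Finset.sum_apply, fmul, smul_eq_mul, Hform]
  rw [Finset.mul_sum, Finset.mul_sum]
  refine Finset.sum_congr rfl fun s _ => ?_
  rw [rhoF_apply]
  simp only [covT, Rc, hT, Tor, mul_sub, Finset.sum_sub_distrib]
  simp only [mul_comm]
  ring

section
variable [NeZero n]

lemma Ph_one (g : Fin n → Pt n → ℝ) (x : Pt n) :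
    Ph 1 (fun a x => g (a 0) x) x = one (fun j => g j x) := by
  have := Ph_succ 0 (fun a x => g (a 0) x) x
  rw [zero_add] at this
  rw [this]
  simp [one, Ph, intr, eb]

lemma Ph_GammaOne (Γ : Fin n → Fin n → Fin n → Pt n → ℝ) (i r : Fin n) (x : Pt n) :
    Ph 1 (GammaOne Γ i r) x = gam Γ x r i := Ph_one (Γ i r) x

lemma dP_GammaOne (Γ : Fin n → Fin n → Fin n → Pt n → ℝ) (i r : Fin n) (x : Pt n) :
    dP 1 (GammaOne Γ i r) x = dgam Γ x r i := by
  unfold dP dgam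
  refine Finset.sum_congr rfl fun k _ => ?_
  congr 1
  exact Ph_one (fun j => pd k (Γ i r j)) x

lemma Ph_rhoF (Γ : Fin n → Fin n → Fin n → Pt n → ℝ) (s j : Fin n) (x : Pt n) :
    Ph 2 (rhoF Γ s j) x = rho Γ x s j := by
  have h1 : Ph 2 (extd 1 (GammaOne Γ j s)) x = dgam Γ x s j := by
    rw [← dP_GammaOne]
    exact Ph_extd (dep_one _) (anti_one _) x
  have h2 : ∀ k, Ph 2 (wedge 1 1 (GammaOne Γ k s) (GammaOne Γ j k)) x
      = gam Γ x s k * gam Γ x k j := by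
    intro k
    rw [← Ph_GammaOne, ← Ph_GammaOne]
    exact Ph_wedge (dep_one _) (dep_one _) x
  simp only [rhoF, Ph_add, Ph_neg, Ph_sum, h1, h2, rho, sub_eq_add_neg]

lemma dP_rhoF {U : Set (Pt n)} (hU : IsOpen U) {Γ : Fin n → Fin n → Fin n → Pt n → ℝ}
    (hG : ∀ i j k, ContDiffOn ℝ (⊤ : ℕ∞) (Γ i j k) U) (s j : Fin n) {x : Pt n} (hx : x ∈ U) :
    dP 2 (rhoF Γ s j) x
      = -∑ k, (dgam Γ x s k * gam Γ x k j - gam Γ x s k * dgam Γ x k j) := by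
  have h1 : dP 2 (extd 1 (GammaOne Γ j s)) x = 0 :=
    dP_extd hU (dep_one _) (anti_one _) (sm_GammaOne hG _ _) hx
  have h2 : ∀ k, dP 2 (wedge 1 1 (GammaOne Γ k s) (GammaOne Γ j k)) x
      = dgam Γ x s k * gam Γ x k j - gam Γ x s k * dgam Γ x k j := by
    intro k
    rw [← Ph_GammaOne, ← Ph_GammaOne, ← dP_GammaOne, ← dP_GammaOne]
    have := dP_wedge (p := 1) (q := 1) (ξ := GammaOne Γ k s) (η := GammaOne Γ j k) hU (dep_one _)
      (dep_one _) (sm_GammaOne hG _ _) (sm_GammaOne hG _ _) hx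
    rw [pow_one, neg_smul, one_smul, ← sub_eq_add_neg] at this
    exact this
  have hs : ∀ k, SmoothOn U (wedge 1 1 (GammaOne Γ k s) (GammaOne Γ j k)) :=
    fun k => sm_wedge (sm_GammaOne hG _ _) (sm_GammaOne hG _ _)
  rw [rhoF, dP_add hU 2 (sm_extd hU (sm_GammaOne hG _ _)) (sm_neg (sm_sum hs)) hx, dP_neg,
    dP_sum hU 2 hs hx, h1, zero_add]
  simp only [h2]

/-- the two-forms `H^{ij}` -/
noncomputable def Hh (ω : Fin n → Fin n → Pt n → ℝ) (Γ : Fin n → Fin n → Fin n → Pt n → ℝ)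
    (x : Pt n) (i j : Fin n) : EA n := Ph 2 (Hform ω Γ i j) x

lemma Hh_eq {U : Set (Pt n)} (hU : IsOpen U) (ω : Fin n → Fin n → Pt n → ℝ)
    {Γ : Fin n → Fin n → Fin n → Pt n → ℝ}
    (hG : ∀ i j k, ContDiffOn ℝ (⊤ : ℕ∞) (Γ i j k) U) (i j : Fin n) {x : Pt n}
    (hx : x ∈ U) : Hh ω Γ x i j = (-(1/2) : ℝ) • ∑ s, ω i s x • rho Γ x s j := by
  unfold Hh
  rw [Ph_congr 2 (fun a => Hform_eq hU ω hG i j a x hx), Ph_smul, Ph_sum]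
  simp only [Ph_fmul, Ph_rhoF]

lemma dep_Hform (ω : Fin n → Fin n → Pt n → ℝ) (Γ : Fin n → Fin n → Fin n → Pt n → ℝ)
    (i j : Fin n) : DependsOn 2 (Hform ω Γ i j) := by
  intro a b hab
  funext x
  simp only [Hform, hab 0 (by norm_num), hab 1 (by norm_num)]

lemma sm_Hform {U : Set (Pt n)} (hU : IsOpen U) {ω : Fin n → Fin n → Pt n → ℝ}
    {Γ : Fin n → Fin n → Fin n → Pt n → ℝ}
    (hω : ∀ i j, ContDiffOn ℝ (⊤ : ℕ∞) (ω i j) U)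
    (hG : ∀ i j k, ContDiffOn ℝ (⊤ : ℕ∞) (Γ i j k) U) (i j : Fin n) :
    SmoothOn U (Hform ω Γ i j) := by
  intro a
  refine ContDiffOn.congr (f := ((-(1/2) : ℝ) • ∑ s, fmul (ω i s) (rhoF Γ s j)) a) ?_
    (fun x hx => Hform_eq hU ω hG i j a x hx)
  exact sm_smul _ (sm_sum fun s => sm_fmul (hω _ _) (sm_rhoF hU hG _ _)) a

lemma one_dω {U : Set (Pt n)} {ω : Fin n → Fin n → Pt n → ℝ}
    {Γ : Fin n → Fin n → Fin n → Pt n → ℝ} (hpc : PoissonCompat U ω Γ) (i j : Fin n)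
    {x : Pt n} (hx : x ∈ U) :
    one (fun k => pd k (ω i j) x)
      = -∑ k, ω k j x • gam Γ x k i - ∑ k, ω i k x • gam Γ x k j := by
  have : ∀ m, pd m (ω i j) x = -∑ k, ω k j x * Γ i k m x - ∑ k, ω i k x * Γ j k m x := by
    intro m
    linarith [hpc i j m x hx]
  simp only [this, one, gam, sub_smul, neg_smul, Finset.sum_smul, Finset.smul_sum,
    Finset.sum_sub_distrib, Finset.sum_neg_distrib, mul_smul]
  rw [Finset.sum_comm]
  congr 1
  rw [Finset.sum_comm]

lemma Hom_gam (Γ : Fin n → Fin n → Fin n → Pt n → ℝ) (x : Pt n) (i m : Fin n) :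
    Hom 1 (gam Γ x i m) := Hom_one _

lemma Hom_rho (Γ : Fin n → Fin n → Fin n → Pt n → ℝ) (x : Pt n) (i m : Fin n) :
    Hom 2 (rho Γ x i m) := by
  rw [← Ph_rhoF]; exact Hom_Ph _ _ _

lemma Hom_Hh (ω : Fin n → Fin n → Pt n → ℝ) (Γ : Fin n → Fin n → Fin n → Pt n → ℝ) (x : Pt n)
    (i m : Fin n) : Hom 2 (Hh ω Γ x i m) := Hom_Ph _ _ _

lemma gam_anti (Γ : Fin n → Fin n → Fin n → Pt n → ℝ) (x : Pt n) (i m j k : Fin n) :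
    gam Γ x i m * gam Γ x j k = - (gam Γ x j k * gam Γ x i m) := by
  have := one_comm (Hom_gam Γ x j k) (fun l => Γ m i l x)
  simpa [gam] using this

lemma rho_symm {U : Set (Pt n)} (hU : IsOpen U) {ω : Fin n → Fin n → Pt n → ℝ}
    {Γ : Fin n → Fin n → Fin n → Pt n → ℝ}
    (hω : ∀ i j, ContDiffOn ℝ (⊤ : ℕ∞) (ω i j) U)
    (hG : ∀ i j k, ContDiffOn ℝ (⊤ : ℕ∞) (Γ i j k) U) (hpc : PoissonCompat U ω Γ) (i j : Fin n)
    {x : Pt n} (hx : x ∈ U) :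
    ∑ m, ω m j x • rho Γ x m i + ∑ m, ω i m x • rho Γ x m j = 0 := by
  have hd : DependsOn 0 (fun _ x => ω i j x : Form n) := fun _ _ _ => rfl
  have hsm : SmoothOn U (fun _ x => ω i j x : Form n) := fun _ => hω i j
  have s1 : ∀ i j k l, SmoothOn U (fmul (ω i j) (GammaOne Γ k l)) := fun i j k l =>
    sm_fmul (hω _ _) (sm_GammaOne hG _ _)
  have hz : ∀ a, ∀ y ∈ U, (extd 0 (fun _ x => ω i j x) + ∑ k, fmul (ω k j) (GammaOne Γ i k)
      + ∑ k, fmul (ω i k) (GammaOne Γ j k)) a y = (0 : Form n) a y := by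
    intro a y hy
    have := hpc i j (a 0) y hy
    simp only [Pi.add_apply, Finset.sum_apply, extd, fmul, GammaOne]
    simpa using this
  have hd0 := dP_congr hU 1 hz hx
  rw [dP_add hU 1 (sm_add (sm_extd hU hsm) (sm_sum fun _ => s1 _ _ _ _)) (sm_sum fun _ => s1 _ _ _ _)
    hx, dP_add hU 1 (sm_extd hU hsm) (sm_sum fun _ => s1 _ _ _ _) hx,
    dP_sum hU 1 (fun _ => s1 _ _ _ _) hx, dP_sum hU 1 (fun _ => s1 _ _ _ _) hx,
    dP_extd hU hd (anti_null _) hsm hx, dP_zero, zero_add] at hd0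
  simp only [dP_fmul hU 1 (hω _ _) (sm_GammaOne hG _ _) hx, one_dω hpc _ _ hx, Ph_GammaOne,
    dP_GammaOne, Finset.sum_add_distrib, sub_mul, neg_mul, Finset.sum_sub_distrib,
    Finset.sum_neg_distrib, Finset.sum_mul, smul_mul_assoc] at hd0
  simp only [rho, smul_sub, Finset.sum_sub_distrib, Finset.smul_sum]
  have c1 : ∑ k, ∑ l, ω k l x • (gam Γ x l j * gam Γ x k i)
      = -∑ k, ∑ l, ω l k x • (gam Γ x l i * gam Γ x k j) := by
    rw [Finset.sum_comm, ← Finset.sum_neg_distrib]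
    refine Finset.sum_congr rfl fun k _ => ?_
    rw [← Finset.sum_neg_distrib]
    refine Finset.sum_congr rfl fun l _ => ?_
    rw [gam_anti, smul_neg]
  rw [c1] at hd0
  rw [Finset.sum_comm (f := fun m l => ω m j x • (gam Γ x m l * gam Γ x l i)),
    Finset.sum_comm (f := fun m l => ω i m x • (gam Γ x m l * gam Γ x l j))]
  rw [← hd0]
  abel

lemma Hh_symm {U : Set (Pt n)} (hU : IsOpen U) {ω : Fin n → Fin n → Pt n → ℝ}
    {Γ : Fin n → Fin n → Fin n → Pt n → ℝ}
    (hω : ∀ i j, ContDiffOn ℝ (⊤ : ℕ∞) (ω i j) U)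
    (hG : ∀ i j k, ContDiffOn ℝ (⊤ : ℕ∞) (Γ i j k) U)
    (hanti : ∀ i j, ∀ x ∈ U, ω i j x = - ω j i x) (hpc : PoissonCompat U ω Γ) (i j : Fin n)
    {x : Pt n} (hx : x ∈ U) : Hh ω Γ x i j = Hh ω Γ x j i := by
  rw [Hh_eq hU ω hG i j hx, Hh_eq hU ω hG j i hx]
  congr 1
  have := rho_symm hU hω hG hpc i j hx
  rw [add_comm] at this
  rw [eq_neg_of_add_eq_zero_left this, ← Finset.sum_neg_distrib]
  refine Finset.sum_congr rfl fun m _ => ?_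
  rw [hanti m j x hx, neg_smul, neg_neg]

lemma H_closed {U : Set (Pt n)} (hU : IsOpen U) {ω : Fin n → Fin n → Pt n → ℝ}
    {Γ : Fin n → Fin n → Fin n → Pt n → ℝ}
    (hω : ∀ i j, ContDiffOn ℝ (⊤ : ℕ∞) (ω i j) U)
    (hG : ∀ i j k, ContDiffOn ℝ (⊤ : ℕ∞) (Γ i j k) U) (hpc : PoissonCompat U ω Γ) (i j : Fin n)
    {x : Pt n} (hx : x ∈ U) :
    dP 2 (Hform ω Γ i j) x + ∑ r, gam Γ x r i * Hh ω Γ x r j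
      + ∑ r, gam Γ x r j * Hh ω Γ x i r = 0 := by
  have hs : ∀ s, SmoothOn U (fmul (ω i s) (rhoF Γ s j)) :=
    fun s => sm_fmul (hω _ _) (sm_rhoF hU hG _ _)
  rw [dP_congr hU 2 (Hform_eq hU ω hG i j) hx, dP_smul hU 2 _ (sm_sum hs) hx, dP_sum hU 2 hs hx]
  simp only [Hh_eq hU ω hG _ _ hx, mul_smul_comm, ← Finset.smul_sum, ← smul_add]
  convert smul_zero _
  have e1 : ∀ r s j, gam Γ x r j * rho Γ x s r = rho Γ x s r * gam Γ x r j := fun r s j =>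
    (two_comm (Hom_rho Γ x s r) _).symm
  simp only [dP_fmul hU 2 (hω _ _) (sm_rhoF hU hG _ _) hx, one_dω hpc _ _ hx, Ph_rhoF,
    dP_rhoF hU hG _ _ hx, Finset.mul_sum, mul_smul_comm, e1, sub_mul, neg_mul, Finset.sum_mul,
    smul_mul_assoc, Finset.sum_add_distrib, Finset.sum_sub_distrib, Finset.sum_neg_distrib,
    smul_sub, smul_neg, Finset.smul_sum]
  rw [Finset.sum_comm (f := fun s m => ω m s x • (gam Γ x m i * rho Γ x s j)),
    Finset.sum_comm (f := fun s m => ω i m x • (gam Γ x m s * rho Γ x s j)),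
    Finset.sum_comm (f := fun r s => ω i s x • (rho Γ x s r * gam Γ x r j))]
  simp only [rho, mul_sub, sub_mul, smul_sub, Finset.sum_sub_distrib, Finset.mul_sum,
    Finset.sum_mul, Finset.smul_sum, mul_assoc]
  have c : ∀ s, ∑ k, ∑ l, ω i s x • (gam Γ x s k * (gam Γ x k l * gam Γ x l j))
     = ∑ k, ∑ l, ω i s x • (gam Γ x s l * (gam Γ x l k * gam Γ x k j)) :=
    fun s => Finset.sum_comm
  simp only [c]
  abel

end

lemma wedge_zero_left (p q : ℕ) (η : Form n) : wedge p q (0 : Form n) η = 0 := by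
  funext a x; simp [wedge]

lemma wedge_zero_right (p q : ℕ) (η : Form n) : wedge p q η (0 : Form n) = 0 := by
  funext a x; simp [wedge]

lemma intr_zero (m : Fin n) (ξ : Form n) : intr 0 m ξ = 0 := by
  funext a x; simp [intr]

/-- one summand of the nonlinear correction -/
noncomputable def hatT (ω : Fin n → Fin n → Pt n → ℝ) (Γ : Fin n → Fin n → Fin n → Pt n → ℝ)
    (p q : ℕ) (ξ η : Form n) (i j : Fin n) : Form n :=
  wedge (2 + (p - 1)) (q - 1) (wedge 2 (p - 1) (Hform ω Γ i j) (intr p i ξ)) (intr q j η)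

lemma hatT_zero_left (ω : Fin n → Fin n → Pt n → ℝ) (Γ : Fin n → Fin n → Fin n → Pt n → ℝ)
    (q : ℕ) (ξ η : Form n) (i j : Fin n) : hatT ω Γ 0 q ξ η i j = 0 := by
  rw [hatT, intr_zero, wedge_zero_right, wedge_zero_left]

lemma hatT_zero_right (ω : Fin n → Fin n → Pt n → ℝ) (Γ : Fin n → Fin n → Fin n → Pt n → ℝ)
    (p : ℕ) (ξ η : Form n) (i j : Fin n) : hatT ω Γ p 0 ξ η i j = 0 := by
  rw [hatT, intr_zero, wedge_zero_right]

lemma HatCorr_eq (ω : Fin n → Fin n → Pt n → ℝ) (Γ : Fin n → Fin n → Fin n → Pt n → ℝ)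
    (p q : ℕ) (ξ η : Form n) :
    HatCorr ω Γ p q ξ η = ((-1 : ℝ) ^ (p + 1)) • ∑ i, ∑ j, hatT ω Γ p q ξ η i j := rfl

section
variable [NeZero n]

variable {U : Set (Pt n)} {ω : Fin n → Fin n → Pt n → ℝ}
  {Γ : Fin n → Fin n → Fin n → Pt n → ℝ} {p q : ℕ} {ξ η : Form n}

lemma dep_hatT (hξ : DependsOn p ξ) (hη : DependsOn q η) (i j : Fin n) :
    DependsOn (p + q) (hatT ω Γ p q ξ η i j) := by
  rcases Nat.eq_zero_or_pos p with rfl | hp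
  · rw [hatT_zero_left]; exact dep_zero
  rcases Nat.eq_zero_or_pos q with rfl | hq
  · rw [hatT_zero_right]; exact dep_zero
  have e : p + q = 2 + (p - 1) + (q - 1) := by omega
  rw [e]
  exact dep_wedge (dep_wedge (dep_Hform ω Γ i j) (dep_intr hξ i)) (dep_intr hη j)

lemma anti_hatT (hξ : DependsOn p ξ) (hη : DependsOn q η) (i j : Fin n) :
    IsAnti (p + q) (hatT ω Γ p q ξ η i j) := by
  rcases Nat.eq_zero_or_pos p with rfl | hp
  · rw [hatT_zero_left]; exact anti_zero
  rcases Nat.eq_zero_or_pos q with rfl | hq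
  · rw [hatT_zero_right]; exact anti_zero
  have e : p + q = 2 + (p - 1) + (q - 1) := by omega
  rw [e]
  exact anti_wedge (dep_wedge (dep_Hform ω Γ i j) (dep_intr hξ i)) (dep_intr hη j)

lemma sm_hatT (hU : IsOpen U) (hω : ∀ i j, ContDiffOn ℝ (⊤ : ℕ∞) (ω i j) U)
    (hG : ∀ i j k, ContDiffOn ℝ (⊤ : ℕ∞) (Γ i j k) U) (hξ : SmoothOn U ξ) (hη : SmoothOn U η)
    (i j : Fin n) : SmoothOn U (hatT ω Γ p q ξ η i j) :=
  sm_wedge (sm_wedge (sm_Hform hU hω hG i j) (sm_intr hξ i)) (sm_intr hη j)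

lemma ct_Ph_zero (m : Fin n) (ξ : Form n) (x : Pt n) : ct m (Ph 0 ξ x) = 0 := by
  rw [ct_Ph (anti_null ξ), intr_zero, Ph_zero]

lemma Ph_hatT (hξ : IsPForm U p ξ) (hη : IsPForm U q η) (i j : Fin n) (x : Pt n) :
    Ph (p + q) (hatT ω Γ p q ξ η i j) x
      = Hh ω Γ x i j * ct i (Ph p ξ x) * ct j (Ph q η x) := by
  rcases Nat.eq_zero_or_pos p with rfl | hp
  · rw [hatT_zero_left, Ph_zero, ct_Ph_zero]; simp
  rcases Nat.eq_zero_or_pos q with rfl | hq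
  · rw [hatT_zero_right, Ph_zero, ct_Ph_zero _ η]; simp
  have e : p + q = 2 + (p - 1) + (q - 1) := by omega
  rw [e, hatT, Ph_wedge (dep_wedge (dep_Hform ω Γ i j) (dep_intr hξ.1 i)) (dep_intr hη.1 j),
    Ph_wedge (dep_Hform ω Γ i j) (dep_intr hξ.1 i), ct_Ph hξ.2.1, ct_Ph hη.2.1, Hh]

lemma dP_hatT (hU : IsOpen U) (hω : ∀ i j, ContDiffOn ℝ (⊤ : ℕ∞) (ω i j) U)
    (hG : ∀ i j k, ContDiffOn ℝ (⊤ : ℕ∞) (Γ i j k) U)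
    (hξ : IsPForm U p ξ) (hη : IsPForm U q η) (i j : Fin n) {x : Pt n} (hx : x ∈ U) :
    dP (p + q) (hatT ω Γ p q ξ η i j) x
      = dP 2 (Hform ω Γ i j) x * ct i (Ph p ξ x) * ct j (Ph q η x)
        + Hh ω Γ x i j * (Ph p (DD i ξ) x - ct i (dP p ξ x)) * ct j (Ph q η x)
        - (-1 : ℝ) ^ p • (Hh ω Γ x i j * ct i (Ph p ξ x)
          * (Ph q (DD j η) x - ct j (dP q η x))) := by
  rw [← dP_intr hξ.2.1, ← dP_intr hη.2.1]
  rcases Nat.eq_zero_or_pos p with rfl | hp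
  · rw [hatT_zero_left, dP_zero, ct_Ph_zero, intr_zero, dP_zero]; simp
  rcases Nat.eq_zero_or_pos q with rfl | hq
  · rw [hatT_zero_right, dP_zero, ct_Ph_zero _ η, intr_zero _ η, dP_zero]; simp
  have e : p + q = 2 + (p - 1) + (q - 1) := by omega
  have e' : (-1 : ℝ) ^ (2 + (p - 1)) = - (-1 : ℝ) ^ p := by
    obtain ⟨r, rfl⟩ : ∃ r, p = r + 1 := ⟨p - 1, by omega⟩
    rw [Nat.add_sub_cancel, pow_add, pow_succ]; ring
  have s1 := sm_Hform hU hω hG i j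
  have s2 := sm_intr (p := p) hξ.2.2 i
  rw [e, hatT, dP_wedge hU (dep_wedge (dep_Hform ω Γ i j) (dep_intr hξ.1 i)) (dep_intr hη.1 j)
    (sm_wedge s1 s2) (sm_intr hη.2.2 j) hx, dP_wedge hU (dep_Hform ω Γ i j) (dep_intr hξ.1 i) s1 s2 hx,
    Ph_wedge (dep_Hform ω Γ i j) (dep_intr hξ.1 i), e', ct_Ph hξ.2.1, ct_Ph hη.2.1, Hh]
  simp [add_mul, sub_eq_add_neg, mul_assoc]

lemma dep_Qcorr (hξ : DependsOn p ξ) (hη : DependsOn q η) :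
    DependsOn (p + q) (Qcorr ω Γ p q ξ η) :=
  dep_smul _ (dep_sum fun i => dep_sum fun j => dep_fmul _
    (dep_wedge (dep_nabla hξ Γ i) (dep_nabla hη Γ j)))

lemma anti_Qcorr (hξ : DependsOn p ξ) (hη : DependsOn q η) :
    IsAnti (p + q) (Qcorr ω Γ p q ξ η) :=
  anti_smul _ (anti_sum fun i => anti_sum fun j => anti_fmul _
    (anti_wedge (dep_nabla hξ Γ i) (dep_nabla hη Γ j)))

lemma sm_Qcorr (hU : IsOpen U) (hω : ∀ i j, ContDiffOn ℝ (⊤ : ℕ∞) (ω i j) U)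
    (hG : ∀ i j k, ContDiffOn ℝ (⊤ : ℕ∞) (Γ i j k) U) (hξ : SmoothOn U ξ) (hη : SmoothOn U η) :
    SmoothOn U (Qcorr ω Γ p q ξ η) :=
  sm_smul _ (sm_sum fun i => sm_sum fun j => sm_fmul (hω _ _)
    (sm_wedge (sm_nabla hU hG hξ i) (sm_nabla hU hG hη j)))

lemma dep_Hat (hξ : DependsOn p ξ) (hη : DependsOn q η) :
    DependsOn (p + q) (HatCorr ω Γ p q ξ η) :=
  dep_smul _ (dep_sum fun i => dep_sum fun j => dep_hatT hξ hη i j)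

lemma anti_Hat (hξ : DependsOn p ξ) (hη : DependsOn q η) :
    IsAnti (p + q) (HatCorr ω Γ p q ξ η) :=
  anti_smul _ (anti_sum fun i => anti_sum fun j => anti_hatT hξ hη i j)

lemma sm_Hat (hU : IsOpen U) (hω : ∀ i j, ContDiffOn ℝ (⊤ : ℕ∞) (ω i j) U)
    (hG : ∀ i j k, ContDiffOn ℝ (⊤ : ℕ∞) (Γ i j k) U) (hξ : SmoothOn U ξ) (hη : SmoothOn U η) :
    SmoothOn U (HatCorr ω Γ p q ξ η) :=
  sm_smul _ (sm_sum fun i => sm_sum fun j => sm_hatT hU hω hG hξ hη i j)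

lemma pf_wedge (hξ : IsPForm U p ξ) (hη : IsPForm U q η) : IsPForm U (p + q) (wedge p q ξ η) :=
  ⟨dep_wedge hξ.1 hη.1, anti_wedge hξ.1 hη.1, sm_wedge hξ.2.2 hη.2.2⟩

lemma pf_add (hξ : IsPForm U p ξ) (hη : IsPForm U p η) : IsPForm U p (ξ + η) :=
  ⟨dep_add hξ.1 hη.1, anti_add hξ.2.1 hη.2.1, sm_add hξ.2.2 hη.2.2⟩

lemma pf_smul (c : ℝ) (hξ : IsPForm U p ξ) : IsPForm U p (c • ξ) :=
  ⟨dep_smul c hξ.1, anti_smul c hξ.2.1, sm_smul c hξ.2.2⟩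

lemma pf_extd (hU : IsOpen U) (hξ : IsPForm U p ξ) : IsPForm U (p + 1) (extd p ξ) :=
  ⟨dep_extd hξ.1, anti_extd hξ.1 hξ.2.1, sm_extd hU hξ.2.2⟩

lemma pfL_wedge1 (hU : IsOpen U) (hω : ∀ i j, ContDiffOn ℝ (⊤ : ℕ∞) (ω i j) U)
    (hG : ∀ i j k, ContDiffOn ℝ (⊤ : ℕ∞) (Γ i j k) U) {ξ η : FormL n}
    (hξ : IsPFormL U p ξ) (hη : IsPFormL U q η) :
    IsPFormL U (p + q) (wedge1 ω Γ p q ξ η) :=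
  ⟨pf_wedge hξ.1 hη.1, pf_add (pf_add (pf_add (pf_wedge hξ.1 hη.2) (pf_wedge hξ.2 hη.1))
    ⟨dep_Qcorr hξ.1.1 hη.1.1, anti_Qcorr hξ.1.1 hη.1.1, sm_Qcorr hU hω hG hξ.1.2.2 hη.1.2.2⟩)
    ⟨dep_Hat hξ.1.1 hη.1.1, anti_Hat hξ.1.1 hη.1.1, sm_Hat hU hω hG hξ.1.2.2 hη.1.2.2⟩⟩

lemma pfL_extd (hU : IsOpen U) {ξ : FormL n} (hξ : IsPFormL U p ξ) :
    IsPFormL U (p + 1) (extdL p ξ) := ⟨pf_extd hU hξ.1, pf_extd hU hξ.2⟩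

lemma Ph_Qcorr (hξ : IsPForm U p ξ) (hη : IsPForm U q η) (x : Pt n) :
    Ph (p + q) (Qcorr ω Γ p q ξ η) x
      = (2⁻¹ : ℝ) • ∑ i, ∑ j, ω i j x • (Ph p (nabla Γ i p ξ) x * Ph q (nabla Γ j q η) x) := by
  rw [Qcorr, Ph_smul, Ph_sum]
  simp only [Ph_sum, Ph_fmul, Ph_wedge (dep_nabla hξ.1 Γ _) (dep_nabla hη.1 Γ _)]

lemma Ph_Hat (hξ : IsPForm U p ξ) (hη : IsPForm U q η) (x : Pt n) :
    Ph (p + q) (HatCorr ω Γ p q ξ η) x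
      = (-1 : ℝ) ^ (p + 1) • ∑ i, ∑ j, Hh ω Γ x i j * ct i (Ph p ξ x) * ct j (Ph q η x) := by
  rw [HatCorr_eq, Ph_smul, Ph_sum]
  simp only [Ph_sum, Ph_hatT hξ hη]

lemma Ph_wedge1_snd {ξ η : FormL n} (hξ : IsPFormL U p ξ) (hη : IsPFormL U q η) (x : Pt n) :
    Ph (p + q) (wedge1 ω Γ p q ξ η).2 x
      = Ph p ξ.1 x * Ph q η.2 x + Ph p ξ.2 x * Ph q η.1 x
      + (2⁻¹ : ℝ) • ∑ i, ∑ j, ω i j x • (Ph p (nabla Γ i p ξ.1) x * Ph q (nabla Γ j q η.1) x)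
      + (-1 : ℝ) ^ (p + 1) • ∑ i, ∑ j, Hh ω Γ x i j * ct i (Ph p ξ.1 x) * ct j (Ph q η.1 x) := by
  rw [wedge1, Ph_add, Ph_add, Ph_add, Ph_wedge hξ.1.1 hη.2.1, Ph_wedge hξ.2.1 hη.1.1,
    Ph_Qcorr hξ.1 hη.1, Ph_Hat hξ.1 hη.1]

lemma gam_comm (ξ : Form n) (x : Pt n) (i m : Fin n) :
    gam Γ x i m * Ph p ξ x = (-1 : ℝ) ^ p • (Ph p ξ x * gam Γ x i m) :=
  one_comm (Hom_Ph p ξ x) _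

lemma sq_sgn (p : ℕ) : (-1 : ℝ) ^ p * (-1 : ℝ) ^ p = 1 := by
  rw [← mul_pow]; simp

lemma comm_gam (ξ : Form n) (x : Pt n) (i m : Fin n) :
    Ph p ξ x * gam Γ x i m = (-1 : ℝ) ^ p • (gam Γ x i m * Ph p ξ x) := by
  rw [gam_comm, smul_smul, sq_sgn, one_smul]

lemma ct_gam (hξ : IsAnti p ξ) (x : Pt n) (l i m : Fin n) :
    ct l (Ph p ξ x) * gam Γ x i m = -((-1 : ℝ) ^ p • (gam Γ x i m * ct l (Ph p ξ x))) := by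
  rcases p with _ | p
  · rw [ct_Ph_zero]; simp
  · rw [ct_Ph hξ, Nat.add_sub_cancel, comm_gam, pow_succ]
    simp

lemma Ph_nabla_wedge (hU : IsOpen U) (hξ : IsPForm U p ξ) (hη : IsPForm U q η) (i : Fin n)
    {x : Pt n} (hx : x ∈ U) :
    Ph (p + q) (nabla Γ i (p + q) (wedge p q ξ η)) x
      = Ph p (nabla Γ i p ξ) x * Ph q η x + Ph p ξ x * Ph q (nabla Γ i q η) x := by
  have hw := pf_wedge hξ hη
  rw [Ph_nabla hw.1 hw.2.1, Ph_nabla hξ.1 hξ.2.1, Ph_nabla hη.1 hη.2.1,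
    Ph_congr _ (DD_wedge hU hξ.2.2 hη.2.2 hx i), Ph_add, Ph_wedge (dep_DD hξ.1 i) hη.1,
    Ph_wedge hξ.1 (dep_DD hη.1 i), Ph_wedge hξ.1 hη.1]
  simp only [ct_mul (Hom_Ph p ξ x), mul_add, Finset.sum_add_distrib, sub_mul, mul_sub,
    Finset.sum_mul, Finset.mul_sum, mul_smul_comm, ← mul_assoc, gam_comm ξ x, smul_mul_assoc,
    smul_smul, sq_sgn, one_smul]
  abel

lemma assoc_main (hU : IsOpen U) (hω : ∀ i j, ContDiffOn ℝ (⊤ : ℕ∞) (ω i j) U)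
    (hG : ∀ i j k, ContDiffOn ℝ (⊤ : ℕ∞) (Γ i j k) U) : WedgeAssoc U ω Γ := by
  intro p q r ξ η ζ hξ hη hζ a x hx
  have w1 := pfL_wedge1 hU hω hG hξ hη
  have w2 := pfL_wedge1 hU hω hG hη hζ
  have l := pfL_wedge1 hU hω hG w1 hζ
  have r := pfL_wedge1 hU hω hG hξ w2
  refine ⟨Ph_inj (Nat.add_assoc _ _ _) l.1.2.1 l.1.1 r.1.2.1 r.1.1 ?_ a,
    Ph_inj (Nat.add_assoc _ _ _) l.2.2.1 l.2.1 r.2.2.1 r.2.1 ?_ a⟩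
  · simp only [wedge1]
    rw [Ph_wedge (dep_wedge hξ.1.1 hη.1.1) hζ.1.1, Ph_wedge hξ.1.1 (dep_wedge hη.1.1 hζ.1.1), Ph_wedge hξ.1.1 hη.1.1,
      Ph_wedge hη.1.1 hζ.1.1, mul_assoc]
  · rw [Ph_wedge1_snd w1 hζ, Ph_wedge1_snd hξ w2, Ph_wedge1_snd hξ hη, Ph_wedge1_snd hη hζ]
    simp only [show (wedge1 ω Γ p q ξ η).1 = wedge p q ξ.1 η.1 from rfl,
      show (wedge1 ω Γ q _ η ζ).1 = wedge q _ η.1 ζ.1 from rfl, 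
      Ph_nabla_wedge hU hξ.1 hη.1 _ hx, Ph_nabla_wedge hU hη.1 hζ.1 _ hx,
      Ph_wedge hξ.1.1 hη.1.1, Ph_wedge hη.1.1 hζ.1.1, ct_mul (Hom_Ph p ξ.1 x),
      ct_mul (Hom_Ph q η.1 x)]
    simp only [mul_add, add_mul, smul_add, Finset.sum_add_distrib, Finset.mul_sum, Finset.sum_mul,
      mul_smul_comm, smul_mul_assoc, Finset.smul_sum, smul_smul, mul_assoc]
    have c : ∀ i j Z, Ph p ξ.1 x * (Hh ω Γ x i j * Z) = Hh ω Γ x i j * (Ph p ξ.1 x * Z) := by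
      intro i j Z
      rw [← mul_assoc, ← two_comm (Hom_Hh ω Γ x i j), mul_assoc]
    have e : (-1 : ℝ) ^ (p + q + 1) * (-1 : ℝ) ^ p = (-1 : ℝ) ^ (q + 1) := by
      have := sq_sgn p
      rw [show p + q + 1 = p + (q + 1) by ring, pow_add]
      linear_combination (-1 : ℝ) ^ (q + 1) * this
    have e' : (-1 : ℝ) ^ (p + 1) * (-1 : ℝ) ^ q = (-1 : ℝ) ^ (p + q + 1) := by ring
    simp only [c, e, e']
    abel

end

section
variable [NeZero n]

variable {U : Set (Pt n)} {ω : Fin n → Fin n → Pt n → ℝ}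
  {Γ : Fin n → Fin n → Fin n → Pt n → ℝ} {p q : ℕ} {ξ η : Form n}

lemma half_rho_left (hU : IsOpen U) (hω : ∀ i j, ContDiffOn ℝ (⊤ : ℕ∞) (ω i j) U)
    (hG : ∀ i j k, ContDiffOn ℝ (⊤ : ℕ∞) (Γ i j k) U)
    (hanti : ∀ i j, ∀ x ∈ U, ω i j x = - ω j i x) (hpc : PoissonCompat U ω Γ) {x : Pt n}
    (hx : x ∈ U) (k j : Fin n) :
    (2⁻¹ : ℝ) • ∑ i, ω i j x • rho Γ x i k = Hh ω Γ x k j := by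
  rw [Hh_symm hU hω hG hanti hpc k j hx, Hh_eq hU ω hG _ _ hx, one_div, neg_smul, ← smul_neg,
    ← Finset.sum_neg_distrib]
  congr 1
  refine Finset.sum_congr rfl fun i _ => ?_
  rw [hanti i j x hx, neg_smul]

lemma half_rho_right (hU : IsOpen U)
    (hG : ∀ i j k, ContDiffOn ℝ (⊤ : ℕ∞) (Γ i j k) U) {x : Pt n}
    (hx : x ∈ U) (i k : Fin n) :
    (2⁻¹ : ℝ) • ∑ j, ω i j x • rho Γ x j k = - Hh ω Γ x i k := by
  rw [Hh_eq hU ω hG _ _ hx, one_div, neg_smul, neg_neg]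

lemma dP_Qcorr (hU : IsOpen U) (hω : ∀ i j, ContDiffOn ℝ (⊤ : ℕ∞) (ω i j) U)
    (hG : ∀ i j k, ContDiffOn ℝ (⊤ : ℕ∞) (Γ i j k) U)
    (hanti : ∀ i j, ∀ x ∈ U, ω i j x = - ω j i x) (hpc : PoissonCompat U ω Γ)
    (hξ : IsPForm U p ξ) (hη : IsPForm U q η) {x : Pt n} (hx : x ∈ U) :
    dP (p + q) (Qcorr ω Γ p q ξ η) x
      = (2⁻¹ : ℝ) • ∑ i, ∑ j, ω i j x •
          (Ph (p + 1) (nabla Γ i (p + 1) (extd p ξ)) x * Ph q (nabla Γ j q η) x)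
        + (-1 : ℝ) ^ p • (2⁻¹ : ℝ) • ∑ i, ∑ j, ω i j x •
          (Ph p (nabla Γ i p ξ) x * Ph (q + 1) (nabla Γ j (q + 1) (extd q η)) x)
        - ∑ i, ∑ j, Hh ω Γ x i j * ct i (Ph p ξ x) * Ph q (nabla Γ j q η) x
        + (-1 : ℝ) ^ p • ∑ i, ∑ j, Hh ω Γ x i j * Ph p (nabla Γ i p ξ) x * ct j (Ph q η x) := by
  have sP := fun i => sm_nabla (p := p) hU hG hξ.2.2 i
  have sQ := fun i => sm_nabla (p := q) hU hG hη.2.2 i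
  have sW : ∀ i j, SmoothOn U (fmul (ω i j) (wedge p q (nabla Γ i p ξ) (nabla Γ j q η))) :=
    fun i j => sm_fmul (hω i j) (sm_wedge (sP i) (sQ j))
  have t1 : ∑ i, ∑ j, Hh ω Γ x i j * ct i (Ph p ξ x) * Ph q (nabla Γ j q η) x
      = (2⁻¹ : ℝ) • ∑ i, ∑ j, ∑ k, ω i j x • (rho Γ x i k * ct k (Ph p ξ x)
          * Ph q (nabla Γ j q η) x) := by
    simp only [← half_rho_left hU hω hG hanti hpc hx, smul_mul_assoc, Finset.sum_mul,
      ← Finset.smul_sum]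
    congr 1
    simp only [Finset.smul_sum]
    rw [Finset.sum_comm]
    rw [Finset.sum_comm (f := fun i j => ∑ k, ω i j x • (rho Γ x i k * ct k (Ph p ξ x)
          * Ph q (nabla Γ j q η) x))]
    exact Finset.sum_congr rfl fun j _ => Finset.sum_comm
  have t2 : ∑ i, ∑ j, Hh ω Γ x i j * Ph p (nabla Γ i p ξ) x * ct j (Ph q η x)
      = -((2⁻¹ : ℝ) • ∑ i, ∑ j, ∑ k, ω i j x • (Ph p (nabla Γ i p ξ) x
          * (rho Γ x j k * ct k (Ph q η x)))) := by
    have h : ∀ i k, Hh ω Γ x i k = -((2⁻¹ : ℝ) • ∑ j, ω i j x • rho Γ x j k) := fun i k => by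
      rw [half_rho_right hU hG hx, neg_neg]
    simp only [h, smul_mul_assoc, Finset.sum_mul, neg_mul, Finset.sum_neg_distrib,
      ← Finset.smul_sum]
    congr 2
    simp only [Finset.smul_sum]
    refine Finset.sum_congr rfl fun i _ => ?_
    rw [Finset.sum_comm]
    refine Finset.sum_congr rfl fun j _ => Finset.sum_congr rfl fun k _ => ?_
    rw [two_comm (Hom_rho Γ x j k), mul_assoc]
  rw [t1, t2]
  rw [Qcorr, dP_smul hU _ _ (sm_sum fun i => sm_sum fun j => sW i j) hx,
    dP_sum hU _ (fun i => sm_sum fun j => sW i j) hx]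
  simp only [dP_sum hU _ (fun j => sW _ j) hx, dP_fmul hU _ (hω _ _) (sm_wedge (sP _) (sQ _)) hx,
    dP_wedge hU (dep_nabla hξ.1 Γ _) (dep_nabla hη.1 Γ _) (sP _) (sQ _) hx,
    Ph_wedge (dep_nabla hξ.1 Γ _) (dep_nabla hη.1 Γ _),
    dP_nabla hU hξ.1 hξ.2.1 hξ.2.2 hG _ hx, dP_nabla hU hη.1 hη.2.1 hη.2.2 hG _ hx,
    one_dω hpc _ _ hx]
  generalize hP : (fun i => Ph p (nabla Γ i p ξ) x) = P
  have hP' : ∀ i, Ph p (nabla Γ i p ξ) x = P i := fun i => congrFun hP i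
  have cP : ∀ i j k, P i * gam Γ x j k = (-1 : ℝ) ^ p • (gam Γ x j k * P i) := fun i j k => by
    rw [← hP', comm_gam]
  have cP' : ∀ i j k Z, P i * (gam Γ x j k * Z) = (-1 : ℝ) ^ p • (gam Γ x j k * (P i * Z)) :=
    fun i j k Z => by rw [← mul_assoc, cP, smul_mul_assoc, mul_assoc]
  generalize (fun i => Ph q (nabla Γ i q η) x) = Q
  simp only [hP', mul_add, add_mul, mul_sub, sub_mul, smul_add, smul_sub, Finset.sum_add_distrib,
    Finset.sum_sub_distrib, Finset.mul_sum, Finset.sum_mul, neg_mul, smul_neg,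
    Finset.sum_neg_distrib, smul_mul_assoc, mul_assoc, cP', smul_smul, sq_sgn,
    one_smul, Finset.smul_sum]
  have sc : ∀ c : ℝ, (2⁻¹ : ℝ) * (c * (-1 : ℝ) ^ p) = (-1 : ℝ) ^ p * (2⁻¹ * c) := fun c => by ring
  have c1 : ∑ i, ∑ j, ∑ k, ((2⁻¹ : ℝ) * ω k j x) • (gam Γ x k i * (P i * Ph q (nabla Γ j q η) x))
      = ∑ i, ∑ j, ∑ k, ((2⁻¹ : ℝ) * ω i j x) • (gam Γ x i k * (P k * Ph q (nabla Γ j q η) x)) := by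
    rw [Finset.sum_comm]
    conv_rhs => rw [Finset.sum_comm]
    exact Finset.sum_congr rfl fun j _ => Finset.sum_comm
  have c2 : ∑ i, ∑ j, ∑ k, ((2⁻¹ : ℝ) * ω i k x) • (gam Γ x k j * (P i * Ph q (nabla Γ j q η) x))
      = ∑ i, ∑ j, ∑ k, ((2⁻¹ : ℝ) * ω i j x) • (gam Γ x j k * (P i * Ph q (nabla Γ k q η) x)) :=
    Finset.sum_congr rfl fun j _ => Finset.sum_comm
  simp only [sc, c1, c2]
  abel

lemma dP_Hat (hU : IsOpen U) (hω : ∀ i j, ContDiffOn ℝ (⊤ : ℕ∞) (ω i j) U)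
    (hG : ∀ i j k, ContDiffOn ℝ (⊤ : ℕ∞) (Γ i j k) U) (hpc : PoissonCompat U ω Γ)
    (hξ : IsPForm U p ξ) (hη : IsPForm U q η) {x : Pt n} (hx : x ∈ U) :
    dP (p + q) (HatCorr ω Γ p q ξ η) x
      = (-1 : ℝ) ^ p • ∑ i, ∑ j, Hh ω Γ x i j * ct i (dP p ξ x) * ct j (Ph q η x)
        - ∑ i, ∑ j, Hh ω Γ x i j * ct i (Ph p ξ x) * ct j (dP q η x)
        + ∑ i, ∑ j, Hh ω Γ x i j * ct i (Ph p ξ x) * Ph q (nabla Γ j q η) x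
        - (-1 : ℝ) ^ p • ∑ i, ∑ j, Hh ω Γ x i j * Ph p (nabla Γ i p ξ) x * ct j (Ph q η x) := by
  have sT := fun i j => sm_hatT (p := p) (q := q) hU hω hG hξ.2.2 hη.2.2 i j
  have hdH : ∀ i j, dP 2 (Hform ω Γ i j) x = -(∑ r, gam Γ x r i * Hh ω Γ x r j)
      - ∑ r, gam Γ x r j * Hh ω Γ x i r := by
    intro i j
    rw [eq_sub_iff_add_eq, eq_neg_iff_add_eq_zero, ← H_closed hU hω hG hpc i j hx]
    abel
  have hX : ∀ i, Ph p (DD i ξ) x = Ph p (nabla Γ i p ξ) x + ∑ m, gam Γ x i m * ct m (Ph p ξ x) := by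
    intro i
    rw [Ph_nabla hξ.1 hξ.2.1, sub_add_cancel]
  have hY : ∀ i, Ph q (DD i η) x = Ph q (nabla Γ i q η) x + ∑ m, gam Γ x i m * ct m (Ph q η x) := by
    intro i
    rw [Ph_nabla hη.1 hη.2.1, sub_add_cancel]
  have cx : ∀ i j k Z, ct i (Ph p ξ x) * (gam Γ x j k * Z)
      = -((-1 : ℝ) ^ p • (gam Γ x j k * (ct i (Ph p ξ x) * Z))) := fun i j k Z => by
    rw [← mul_assoc, ct_gam hξ.2.1, neg_mul, smul_mul_assoc, mul_assoc]
  have cH : ∀ i j k l Z, gam Γ x i j * (Hh ω Γ x k l * Z) = Hh ω Γ x k l * (gam Γ x i j * Z) :=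
    fun i j k l Z => by rw [← mul_assoc, ← two_comm (Hom_Hh ω Γ x k l), mul_assoc]
  have e : (-1 : ℝ) ^ (p + 1) = - (-1 : ℝ) ^ p := by ring
  rw [HatCorr_eq, dP_smul hU _ _ (sm_sum fun i => sm_sum fun j => sT i j) hx,
    dP_sum hU _ (fun i => sm_sum fun j => sT i j) hx, e]
  simp only [dP_sum hU _ (fun j => sT _ j) hx, dP_hatT hU hω hG hξ hη _ _ hx, hdH, hX, hY]
  simp only [mul_add, add_mul, mul_sub, sub_mul, smul_add, smul_sub, Finset.sum_add_distrib,
    Finset.sum_sub_distrib, Finset.mul_sum, Finset.sum_mul, neg_mul, mul_neg, smul_neg, neg_smul,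
    Finset.sum_neg_distrib, smul_mul_assoc, mul_smul_comm, mul_assoc, cx, cH, smul_smul, sq_sgn,
    one_smul, Finset.smul_sum]
  have c1 : ∑ i, ∑ j, ∑ r, (-1 : ℝ) ^ p • (Hh ω Γ x r j * (gam Γ x r i *
        (ct i (Ph p ξ x) * ct j (Ph q η x))))
      = ∑ i, ∑ j, ∑ r, (-1 : ℝ) ^ p • (Hh ω Γ x i j * (gam Γ x i r *
        (ct r (Ph p ξ x) * ct j (Ph q η x)))) := by
    rw [Finset.sum_comm]
    conv_rhs => rw [Finset.sum_comm]
    exact Finset.sum_congr rfl fun j _ => Finset.sum_comm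
  have c2 : ∑ i, ∑ j, ∑ r, (-1 : ℝ) ^ p • (Hh ω Γ x i r * (gam Γ x r j *
        (ct i (Ph p ξ x) * ct j (Ph q η x))))
      = ∑ i, ∑ j, ∑ r, (-1 : ℝ) ^ p • (Hh ω Γ x i j * (gam Γ x j r *
        (ct i (Ph p ξ x) * ct r (Ph q η x)))) :=
    Finset.sum_congr rfl fun j _ => Finset.sum_comm
  simp only [c1, c2]
  abel

lemma leibniz_main (hU : IsOpen U) (hω : ∀ i j, ContDiffOn ℝ (⊤ : ℕ∞) (ω i j) U)
    (hG : ∀ i j k, ContDiffOn ℝ (⊤ : ℕ∞) (Γ i j k) U)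
    (hanti : ∀ i j, ∀ x ∈ U, ω i j x = - ω j i x) (hpc : PoissonCompat U ω Γ) :
    LeibnizRule U ω Γ := by
  intro p q ξ η hξ hη a x hx
  have w := pfL_wedge1 hU hω hG hξ hη
  have l := pfL_extd hU w
  have w1 := pfL_wedge1 hU hω hG (pfL_extd hU hξ) hη
  have w2 := pfL_wedge1 hU hω hG hξ (pfL_extd hU hη)
  have e1 : p + 1 + q = p + q + 1 := by ring
  have e2 : p + (q + 1) = p + q + 1 := by ring
  have r1 : IsPForm U (p + q + 1) (wedge1 ω Γ (p + 1) q (extdL p ξ) η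
              + ((-1 : ℝ) ^ p) • wedge1 ω Γ p (q + 1) ξ (extdL q η)).1 :=
    pf_add (e1 ▸ w1.1) (pf_smul _ (e2 ▸ w2.1))
  have r2 : IsPForm U (p + q + 1) (wedge1 ω Γ (p + 1) q (extdL p ξ) η
              + ((-1 : ℝ) ^ p) • wedge1 ω Γ p (q + 1) ξ (extdL q η)).2 :=
    pf_add (e1 ▸ w1.2) (pf_smul _ (e2 ▸ w2.2))
  refine ⟨Ph_inj rfl l.1.2.1 l.1.1 r1.2.1 r1.1 ?_ a, Ph_inj rfl l.2.2.1 l.2.1 r2.2.1 r2.1 ?_ a⟩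
  · rw [Prod.fst_add, Prod.smul_fst, Ph_add, Ph_smul]
    have h1 : Ph (p + q + 1) (wedge1 ω Γ (p + 1) q (extdL p ξ) η).1 x
        = dP p ξ.1 x * Ph q η.1 x := by
      rw [← e1, ← Ph_extd hξ.1.1 hξ.1.2.1]
      exact Ph_wedge (dep_extd hξ.1.1) hη.1.1 x
    have h2 : Ph (p + q + 1) (wedge1 ω Γ p (q + 1) ξ (extdL q η)).1 x
        = Ph p ξ.1 x * dP q η.1 x := by
      rw [← e2, ← Ph_extd hη.1.1 hη.1.2.1]
      exact Ph_wedge hξ.1.1 (dep_extd hη.1.1) x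
    rw [h1, h2, extdL, Ph_extd w.1.1 w.1.2.1]
    exact dP_wedge hU hξ.1.1 hη.1.1 hξ.1.2.2 hη.1.2.2 hx
  · rw [Prod.snd_add, Prod.smul_snd, Ph_add, Ph_smul]
    have h1 := Ph_wedge1_snd (ω := ω) (Γ := Γ) (pfL_extd hU hξ) hη x
    have h2 := Ph_wedge1_snd (ω := ω) (Γ := Γ) hξ (pfL_extd hU hη) x
    rw [e1] at h1
    rw [e2] at h2
    simp only [extdL] at h1 h2 ⊢
    rw [h1, h2, Ph_extd w.2.1 w.2.2.1, Ph_extd hξ.1.1 hξ.1.2.1, Ph_extd hξ.2.1 hξ.2.2.1,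
      Ph_extd hη.1.1 hη.1.2.1, Ph_extd hη.2.1 hη.2.2.1]
    have sQ := sm_Qcorr (p := p) (q := q) hU hω hG hξ.1.2.2 hη.1.2.2
    have sH := sm_Hat (p := p) (q := q) hU hω hG hξ.1.2.2 hη.1.2.2
    have sa := sm_wedge (p := p) (q := q) hξ.1.2.2 hη.2.2.2
    have sb := sm_wedge (p := p) (q := q) hξ.2.2.2 hη.1.2.2
    rw [wedge1, dP_add hU _ (sm_add (sm_add sa sb) sQ) sH hx, dP_add hU _ (sm_add sa sb) sQ hx,
      dP_add hU _ sa sb hx, dP_wedge hU hξ.1.1 hη.2.1 hξ.1.2.2 hη.2.2.2 hx,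
      dP_wedge hU hξ.2.1 hη.1.1 hξ.2.2.2 hη.1.2.2 hx,
      dP_Qcorr hU hω hG hanti hpc hξ.1 hη.1 hx, dP_Hat hU hω hG hpc hξ.1 hη.1 hx]
    have s1 : (-1 : ℝ) ^ (p + 1 + 1) = (-1 : ℝ) ^ p := by ring
    have s2 : ∀ Z : EA n, (-1 : ℝ) ^ p • (-1 : ℝ) ^ (p + 1) • Z = - Z := by
      intro Z
      rw [smul_smul, pow_succ, ← mul_assoc, sq_sgn]; simp
    simp only [smul_add, s1, s2]
    abel

end

/-- for Poisson-compatible `(ω, ∇)`, `(Ω(U) ⊗ ℝ[λ]/(λ²), ∧₁, d)` is a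
differential graded algebra to order `λ`: the quantum wedge `∧₁` is associative and the
undeformed exterior derivative satisfies the graded Leibniz rule for `∧₁`. -/
theorem statement_12 (U : Set (Pt n)) (hU : IsOpen U)
    (ω : Fin n → Fin n → Pt n → ℝ)
    (Γ : Fin n → Fin n → Fin n → Pt n → ℝ)
    (hωs : ∀ i j, ContDiffOn ℝ (⊤ : ℕ∞) (ω i j) U)
    (hΓs : ∀ i j k, ContDiffOn ℝ (⊤ : ℕ∞) (Γ i j k) U)
    (hanti : ∀ i j, ∀ x ∈ U, ω i j x = - ω j i x)
    (hpc : PoissonCompat U ω Γ) :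
    WedgeAssoc U ω Γ ∧ LeibnizRule U ω Γ := by
  rcases Nat.eq_zero_or_pos n with h0 | h0
  · subst h0
    exact ⟨fun _ _ _ _ _ _ _ _ _ a => (a 0).elim0, fun _ _ _ _ _ _ a => (a 0).elim0⟩
  · haveI : NeZero n := ⟨h0.ne'⟩
    exact ⟨assoc_main hU hωs hΓs, leibniz_main hU hωs hΓs hanti hpc⟩

end Stmt12
end

section
/- On an open set U ⊆ ℝⁿ with smooth Christoffel symbols Γ^i_{jk} (torsion T^k_{ji} = Γ^k_{ji} − Γ^k_{ij}), for every smooth vector field v = (v^j) and every smooth p-form ξ: v⌟dξ + d(v⌟ξ) = v^j ∇_j ξ + Σ_{i,k} [(∂_i v^k + Γ^k_{im} v^m) + v^j T^k_{ji}] dx^i ∧ (∂_k⌟ξ), where dx^i ∧ (∂_k⌟ξ) is the wedge of the i-th coordinate 1-form with the interior product of ξ by the k-th coordinate vector field. (The left hand side is the Lie derivative of ξ along v.) -/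
namespace Stmt13

variable {n : ℕ}

/-- A point of the coordinate chart. -/
abbrev Pt (n : ℕ) := Fin n → ℝ

/-- The coefficient family of a differential form: a `p`-form is a family
`ξ_{a 0, …, a (p−1)}` of functions (only the first `p` index slots are used). -/
abbrev Form (n : ℕ) := (ℕ → Fin n) → Pt n → ℝ

/-- Partial derivative in the `i`-th coordinate direction. -/
noncomputable def pd (i : Fin n) (f : Pt n → ℝ) (x : Pt n) : ℝ :=
  fderiv ℝ f x (Pi.single i 1)

/-- Wedge product of a `p`-form and a `q`-form (coordinate formula). -/
noncomputable def wedge (p q : ℕ) (ξ η : Form n) : Form n := fun a x =>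
  ((p.factorial * q.factorial : ℕ) : ℝ)⁻¹ *
    ∑ σ : Equiv.Perm (Fin (p + q)),
      ((Equiv.Perm.sign σ : ℤ) : ℝ) *
        ξ (fun t => if h : t < p then a ((σ ⟨t, by omega⟩ : Fin (p + q)) : ℕ) else a t) x *
        η (fun t => if h : t < q then a ((σ ⟨p + t, by omega⟩ : Fin (p + q)) : ℕ) else a t) x

/-- Exterior derivative of a `p`-form:
`(dξ)_{a_0⋯a_p} = Σ_k (−1)^k ∂_{a_k} ξ_{a_0⋯(omit a_k)⋯a_p}`. -/
noncomputable def extd (p : ℕ) (ξ : Form n) : Form n := fun a x =>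
  ∑ k : Fin (p + 1),
    (-1 : ℝ) ^ (k : ℕ) *
      pd (a (k : ℕ)) (ξ (fun t => if t < (k : ℕ) then a t else a (t + 1))) x

/-- Interior product of a `p`-form with the `m`-th coordinate vector field
(zero on `0`-forms). -/
def intr (p : ℕ) (m : Fin n) (ξ : Form n) : Form n :=
  if p = 0 then (fun _ _ => 0)
  else fun a x => ξ (fun t => if t = 0 then m else a (t - 1)) x

/-- Interior product of a `p`-form with a vector field `v` (zero on `0`-forms). -/
noncomputable def iprod (p : ℕ) (v : Fin n → Pt n → ℝ) (ξ : Form n) : Form n :=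
  if p = 0 then (fun _ _ => 0)
  else fun a x => ∑ m, v m x * ξ (fun t => if t = 0 then m else a (t - 1)) x

/-- Covariant derivative of a `p`-form:
`(∇_i ξ)_{a_1⋯a_p} = ∂_i ξ_{a_1⋯a_p} − Σ_k Γ^m_{i a_k} ξ_{⋯ m ⋯}`. -/
noncomputable def nabla (Γ : Fin n → Fin n → Fin n → Pt n → ℝ) (i : Fin n) (p : ℕ)
    (ξ : Form n) : Form n := fun a x =>
  pd i (ξ a) x
    - ∑ k : Fin p, ∑ m, Γ m i (a (k : ℕ)) x * ξ (fun t => if t = (k : ℕ) then m else a t) x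

/-- Multiplication of a form by a scalar function. -/
def fmul (f : Pt n → ℝ) (ξ : Form n) : Form n := fun a x => f x * ξ a x

/-- `ξ` depends only on its first `p` index slots. -/
def DependsOn (p : ℕ) (ξ : Form n) : Prop :=
  ∀ a b : ℕ → Fin n, (∀ t, t < p → a t = b t) → ξ a = ξ b

/-- `ξ` is totally antisymmetric in its first `p` index slots. -/
def IsAnti (p : ℕ) (ξ : Form n) : Prop :=
  ∀ (a : ℕ → Fin n) (i j : ℕ), i < p → j < p → i ≠ j →
    ∀ x, ξ (fun t => a (Equiv.swap i j t)) x = - ξ a x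

/-- `ξ` has smooth coefficients on `U`. -/
def SmoothOn (U : Set (Pt n)) (ξ : Form n) : Prop :=
  ∀ a, ContDiffOn ℝ (⊤ : ℕ∞) (ξ a) U

/-- `ξ` is (the coefficient family of) a smooth `p`-form on `U`. -/
def IsPForm (U : Set (Pt n)) (p : ℕ) (ξ : Form n) : Prop :=
  DependsOn p ξ ∧ IsAnti p ξ ∧ SmoothOn U ξ

/-- Torsion `T^i_{jk} = Γ^i_{jk} - Γ^i_{kj}`. -/
def Tor (Γ : Fin n → Fin n → Fin n → Pt n → ℝ) (i j k : Fin n) (x : Pt n) : ℝ :=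
  Γ i j k x - Γ i k j x

/-- Curvature `R^l_{ijk} = ∂_j Γ^l_{ki} − ∂_k Γ^l_{ji} + Γ^m_{ki} Γ^l_{jm} − Γ^m_{ji} Γ^l_{km}`. -/
noncomputable def Rc (Γ : Fin n → Fin n → Fin n → Pt n → ℝ) (l i j k : Fin n)
    (x : Pt n) : ℝ :=
  pd j (Γ l k i) x - pd k (Γ l j i) x
    + ∑ m, Γ m k i x * Γ l j m x - ∑ m, Γ m j i x * Γ l k m x

/-- Covariant derivative of the torsion:
`T^j_{ab;s} = ∂_s T^j_{ab} + Γ^j_{sp} T^p_{ab} − Γ^p_{sa} T^j_{pb} − Γ^p_{sb} T^j_{ap}`. -/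
noncomputable def covT (Γ : Fin n → Fin n → Fin n → Pt n → ℝ) (j a b s : Fin n)
    (x : Pt n) : ℝ :=
  pd s (Tor Γ j a b) x + ∑ p, Γ j s p x * Tor Γ p a b x
    - ∑ p, Γ p s a x * Tor Γ j p b x - ∑ p, Γ p s b x * Tor Γ j a p x

/-- The pair `(ω, ∇)` is Poisson-compatible on `U`. -/
def PoissonCompat (U : Set (Pt n)) (ω : Fin n → Fin n → Pt n → ℝ)
    (Γ : Fin n → Fin n → Fin n → Pt n → ℝ) : Prop :=
  ∀ i j m, ∀ x ∈ U,
    pd m (ω i j) x + ∑ k, ω k j x * Γ i k m x + ∑ k, ω i k x * Γ j k m x = 0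

/-- The 2-form `H^{ij} = (1/4) ω^{is}(T^j_{nm;s} − 2 R^j_{nms}) dx^m ∧ dx^n`
(as a coefficient family, slots `(a 0, a 1) = (m, n)`). -/
noncomputable def Hform (ω : Fin n → Fin n → Pt n → ℝ)
    (Γ : Fin n → Fin n → Fin n → Pt n → ℝ) (i j : Fin n) : Form n := fun a x =>
  (1 / 4 : ℝ) * ∑ s, ω i s x *
    ((covT Γ j (a 1) (a 0) s x - 2 * Rc Γ j (a 1) (a 0) s x)
      - (covT Γ j (a 0) (a 1) s x - 2 * Rc Γ j (a 0) (a 1) s x))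

/-- The `λ`-correction term `(1/2) ω^{ij} ∇_i ξ ∧ ∇_j η` of the functorial product `∧_Q`. -/
noncomputable def Qcorr (ω : Fin n → Fin n → Pt n → ℝ)
    (Γ : Fin n → Fin n → Fin n → Pt n → ℝ) (p q : ℕ) (ξ η : Form n) : Form n :=
  (2⁻¹ : ℝ) • ∑ i, ∑ j, fmul (ω i j) (wedge p q (nabla Γ i p ξ) (nabla Γ j q η))

/-- The coordinate 1-form `dx^i`. -/
def dxF (i : Fin n) : Form n := fun a _ => if a 0 = i then 1 else 0

lemma perm_anti {p : ℕ} {ξ : Form n} (hanti : IsAnti p ξ) (x : Pt n)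
    (σ : Equiv.Perm (Fin p)) : ∀ a : ℕ → Fin n,
    ξ (fun t => if h : t < p then a ((σ ⟨t, h⟩ : Fin p) : ℕ) else a t) x
      = ((Equiv.Perm.sign σ : ℤ) : ℝ) * ξ a x := by
  induction σ using Equiv.Perm.swap_induction_on with
  | one => intro a; simp
  | swap_mul f i j hij ih =>
    intro a
    have h1 := ih (fun t => a (Equiv.swap (i : ℕ) (j : ℕ) t))
    have h2 := hanti a i j i.2 j.2 (fun h => hij (Fin.ext h)) x
    rw [h2] at h1
    have h3 : (fun t => if h : t < p then
          a (((Equiv.swap i j * f) ⟨t, h⟩ : Fin p) : ℕ) else a t)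
        = (fun t => if h : t < p then
          (fun t => a (Equiv.swap (i : ℕ) (j : ℕ) t)) ((f ⟨t, h⟩ : Fin p) : ℕ)
          else (fun t => a (Equiv.swap (i : ℕ) (j : ℕ) t)) t) := by
      funext t
      by_cases h : t < p
      · simp only [h, dif_pos, Equiv.Perm.mul_apply]
        congr 1
        simp only [Equiv.swap_apply_def, Fin.ext_iff]
        split_ifs <;> rfl
      · have hi : t ≠ i := by have := i.2; omega
        have hj : t ≠ j := by have := j.2; omega
        simp [h, Equiv.swap_apply_of_ne_of_ne hi hj]
    rw [h3, h1]
    simp [Equiv.Perm.sign_swap hij]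

lemma cycle_anti {p : ℕ} {ξ : Form n} (hanti : IsAnti p ξ) (x : Pt n) (j : ℕ) :
    j < p → ∀ b : ℕ → Fin n,
    ξ (fun t => if t = 0 then b j else if t ≤ j then b (t - 1) else b t) x
      = (-1 : ℝ) ^ j * ξ b x := by
  induction j with
  | zero =>
    intro _ b
    have : (fun t => if t = 0 then b 0 else if t ≤ 0 then b (t - 1) else b t) = b := by
      funext t
      by_cases h : t = 0 <;> simp [h]
    rw [this]; simp
  | succ j ih =>
    intro hj b
    have h1 := ih (by omega) (fun t => b (Equiv.swap j (j + 1) t))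
    rw [hanti b j (j + 1) (by omega) hj (by omega) x] at h1
    have h3 : (fun t => if t = 0 then b (j + 1) else if t ≤ j + 1 then b (t - 1) else b t)
        = (fun t => if t = 0 then (fun t => b (Equiv.swap j (j + 1) t)) j
          else if t ≤ j then (fun t => b (Equiv.swap j (j + 1) t)) (t - 1)
          else (fun t => b (Equiv.swap j (j + 1) t)) t) := by
      funext t
      simp only [Equiv.swap_apply_def]
      split_ifs <;> first | rfl | omega | (congr 1; omega)
    rw [h3, h1]
    ring

lemma sum_perm_zero (q N : ℕ) (hN : N = q + 1) (h0 : 0 < N) (f : Fin N → ℝ) :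
    ∑ σ : Equiv.Perm (Fin N), f (σ ⟨0, h0⟩) = (q.factorial : ℝ) * ∑ j, f j := by
  subst hN
  have h : ∀ σ : Equiv.Perm (Fin (q + 1)), f (σ ⟨0, h0⟩)
      = (fun y : Fin (q + 1) × Equiv.Perm (Fin q) => f y.1) (Equiv.Perm.decomposeFin σ) := by
    intro σ
    obtain ⟨y, rfl⟩ := Equiv.Perm.decomposeFin.symm.surjective σ
    rw [Equiv.apply_symm_apply]
    have := Equiv.Perm.decomposeFin_symm_apply_zero y.1 y.2
    exact congrArg f this
  rw [Finset.sum_congr rfl (fun σ _ => h σ), 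
    Equiv.sum_comp Equiv.Perm.decomposeFin
      (fun y : Fin (q + 1) × Equiv.Perm (Fin q) => f y.1),
    Fintype.sum_prod_type]
  simp [Fintype.card_perm, Finset.mul_sum]

lemma wedge_dx {q : ℕ} {ξ : Form n} (hdep : DependsOn (q + 1) ξ) (hanti : IsAnti (q + 1) ξ)
    (i k : Fin n) (a : ℕ → Fin n) (x : Pt n) :
    wedge 1 q (dxF i) (intr (q + 1) k ξ) a x
      = ∑ j : Fin (q + 1), (if a (j : ℕ) = i then 1 else 0)
          * ξ (fun t => if t = (j : ℕ) then k else a t) x := by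
  rw [Nat.add_comm q 1] at hdep hanti
  have key : ∀ σ : Equiv.Perm (Fin (1 + q)),
      ((Equiv.Perm.sign σ : ℤ) : ℝ) *
        dxF i (fun t => if h : t < 1 then a ((σ ⟨t, by omega⟩ : Fin (1 + q)) : ℕ) else a t) x *
        intr (q + 1) k ξ
          (fun t => if h : t < q then a ((σ ⟨1 + t, by omega⟩ : Fin (1 + q)) : ℕ) else a t) x
      = (fun j : Fin (1 + q) => (if a (j : ℕ) = i then (1 : ℝ) else 0)
          * ξ (fun t => if t = (j : ℕ) then k else a t) x) (σ ⟨0, by omega⟩) := by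
    intro σ
    have h1 := perm_anti hanti x σ
      (fun t => if t = ((σ ⟨0, by omega⟩ : Fin (1 + q)) : ℕ) then k else a t)
    have h2 : intr (q + 1) k ξ
          (fun t => if h : t < q then a ((σ ⟨1 + t, by omega⟩ : Fin (1 + q)) : ℕ) else a t) x
        = ((Equiv.Perm.sign σ : ℤ) : ℝ) *
          ξ (fun t => if t = ((σ ⟨0, by omega⟩ : Fin (1 + q)) : ℕ) then k else a t) x := by
      rw [← h1]
      simp only [intr, Nat.succ_ne_zero, if_false]
      refine congrFun (hdep _ _ ?_) x
      intro t ht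
      by_cases h : t = 0
      · subst h; simp
      · obtain ⟨s, rfl⟩ := Nat.exists_eq_succ_of_ne_zero h
        have hs : s < q := by omega
        have hne : ((σ ⟨s.succ, ht⟩ : Fin (1 + q)) : ℕ)
            ≠ ((σ ⟨0, by omega⟩ : Fin (1 + q)) : ℕ) := by
          intro hh
          have := σ.injective (Fin.ext hh)
          simp at this
        simp only [ht, dif_pos, hne, if_false, h, Nat.succ_sub_one, hs]
        have he : (⟨1 + s, by omega⟩ : Fin (1 + q)) = ⟨s.succ, ht⟩ :=
          Fin.ext (Nat.add_comm 1 s)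
        simp [he]
    rw [h2]
    have hs : ((Equiv.Perm.sign σ : ℤ) : ℝ) * ((Equiv.Perm.sign σ : ℤ) : ℝ) = 1 := by
      rcases Int.units_eq_one_or (Equiv.Perm.sign σ) with h | h <;> simp [h]
    simp only [dxF, Nat.lt_one_iff, dif_pos]
    linear_combination ((if a ((σ ⟨0, by omega⟩ : Fin (1 + q)) : ℕ) = i then (1 : ℝ) else 0)
      * ξ (fun t => if t = ((σ ⟨0, by omega⟩ : Fin (1 + q)) : ℕ) then k else a t) x) * hs
  unfold wedge
  rw [Finset.sum_congr rfl (fun σ _ => key σ),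
    sum_perm_zero q (1 + q) (by omega) (by omega)
      (fun j : Fin (1 + q) => (if a (j : ℕ) = i then (1 : ℝ) else 0)
          * ξ (fun t => if t = (j : ℕ) then k else a t) x)]
  have hq : (q.factorial : ℝ) ≠ 0 := by exact_mod_cast q.factorial_ne_zero
  rw [← mul_assoc]
  simp only [Nat.factorial_one, one_mul]
  rw [inv_mul_cancel₀ hq, one_mul]
  exact Fintype.sum_equiv (finCongr (Nat.add_comm 1 q)) _ _ (fun j => rfl)

lemma pd_sum_mul {U : Set (Pt n)} (hU : IsOpen U) (v g : Fin n → Pt n → ℝ)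
    (hv : ∀ m, ContDiffOn ℝ (⊤ : ℕ∞) (v m) U) (hg : ∀ m, ContDiffOn ℝ (⊤ : ℕ∞) (g m) U)
    (i : Fin n) (x : Pt n) (hx : x ∈ U) :
    pd i (fun y => ∑ m, v m y * g m y) x
      = ∑ m, (pd i (v m) x * g m x + v m x * pd i (g m) x) := by
  have dv : ∀ m, DifferentiableAt ℝ (v m) x := fun m =>
    ((hv m).contDiffAt (hU.mem_nhds hx)).differentiableAt (by simp)
  have dg : ∀ m, DifferentiableAt ℝ (g m) x := fun m =>
    ((hg m).contDiffAt (hU.mem_nhds hx)).differentiableAt (by simp)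
  unfold pd
  rw [fderiv_fun_sum (A := fun m y => v m y * g m y) (fun m _ => (dv m).mul (dg m))]
  simp only [ContinuousLinearMap.sum_apply]
  refine Finset.sum_congr rfl fun m _ => ?_
  have := fderiv_mul (dv m) (dg m)
  rw [show (fun y => v m y * g m y) = v m * g m from rfl, this]
  simp
  ring

lemma lie_coord {U : Set (Pt n)} (hU : IsOpen U)
    (v : Fin n → Pt n → ℝ) (hvs : ∀ m, ContDiffOn ℝ (⊤ : ℕ∞) (v m) U)
    (q : ℕ) (ξ : Form n) (hξ : IsPForm U (q + 1) ξ) (a : ℕ → Fin n) (x : Pt n) (hx : x ∈ U) :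
    iprod (q + 1 + 1) v (extd (q + 1) ξ) a x + extd q (iprod (q + 1) v ξ) a x
      = ∑ m, v m x * pd m (ξ a) x
        + ∑ j : Fin (q + 1), ∑ m, pd (a (j : ℕ)) (v m) x
            * ξ (fun t => if t = (j : ℕ) then m else a t) x := by
  obtain ⟨hdep, hanti, hsm⟩ := hξ
  -- the index family `m :: (a with slot j omitted)`
  let B : ℕ → Fin n → ℕ → Fin n := fun j m t =>
    if t = 0 then m else if t - 1 < j then a (t - 1) else a (t - 1 + 1)
  have h1 : iprod (q + 1 + 1) v (extd (q + 1) ξ) a x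
      = ∑ m, v m x * (pd m (ξ a) x
        + ∑ j : Fin (q + 1), (-1 : ℝ) ^ ((j : ℕ) + 1) * pd (a (j : ℕ)) (ξ (B j m)) x) := by
    simp only [iprod, extd, Nat.succ_ne_zero, if_false]
    refine Finset.sum_congr rfl fun m _ => ?_
    congr 1
    rw [Fin.sum_univ_succ]
    congr 1
    · simp
    · refine Finset.sum_congr rfl fun j _ => ?_
      have : (fun t => if t < ((Fin.succ j : Fin (q + 1 + 1)) : ℕ) then
            (if t = 0 then m else a (t - 1)) else a (t + 1 - 1))
          = B j m := by
        funext t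
        simp only [B, Fin.val_succ]
        split_ifs <;> first | rfl | omega | (congr 1; omega)
      rw [this]
      simp
  have h2 : extd q (iprod (q + 1) v ξ) a x
      = ∑ j : Fin (q + 1), (-1 : ℝ) ^ (j : ℕ) * ∑ m,
          (pd (a (j : ℕ)) (v m) x * ξ (B j m) x + v m x * pd (a (j : ℕ)) (ξ (B j m)) x) := by
    simp only [iprod, extd, Nat.succ_ne_zero, if_false]
    refine Finset.sum_congr rfl fun j _ => ?_
    rw [← pd_sum_mul hU v (fun m => ξ (B j m)) hvs (fun m => hsm _) _ x hx]
  have h3 : ∀ (j : Fin (q + 1)) (m : Fin n), (-1 : ℝ) ^ (j : ℕ) * ξ (B j m) x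
      = ξ (fun t => if t = (j : ℕ) then m else a t) x := by
    intro j m
    have h := cycle_anti hanti x j j.2 (fun t => if t = (j : ℕ) then m else a t)
    have hB : (fun t : ℕ => if t = 0 then (fun t => if t = (j : ℕ) then m else a t) (j : ℕ)
          else if t ≤ (j : ℕ) then (fun t => if t = (j : ℕ) then m else a t) (t - 1)
          else (fun t => if t = (j : ℕ) then m else a t) t) = B j m := by
      funext t
      simp only [B]
      split_ifs <;> first | rfl | omega | (congr 1; omega)
    rw [hB] at h
    rw [h, ← mul_assoc, ← mul_pow]
    simp
  rw [h1, h2]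
  simp only [← h3, mul_add, Finset.sum_add_distrib, Finset.mul_sum]
  rw [Finset.sum_comm (f := fun (m : Fin n) (j : Fin (q + 1)) =>
    v m x * ((-1 : ℝ) ^ ((j : ℕ) + 1) * pd (a (j : ℕ)) (ξ (B j m)) x))]
  rw [add_assoc]
  congr 1
  simp only [← Finset.sum_add_distrib]
  refine Finset.sum_congr rfl fun j _ => Finset.sum_congr rfl fun m _ => ?_
  ring

/-- Cartan-type formula: for a vector field `v` and a `p`-form `ξ`,
`v⌟dξ + d(v⌟ξ) = v^j ∇_j ξ
  + Σ_{i,k} [(∂_i v^k + Γ^k_{im} v^m) + v^j T^k_{ji}] dx^i ∧ (∂_k⌟ξ)`. -/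
theorem statement_13 (U : Set (Pt n)) (hU : IsOpen U)
    (Γ : Fin n → Fin n → Fin n → Pt n → ℝ)
    (hΓs : ∀ i j k, ContDiffOn ℝ (⊤ : ℕ∞) (Γ i j k) U)
    (v : Fin n → Pt n → ℝ) (hvs : ∀ m, ContDiffOn ℝ (⊤ : ℕ∞) (v m) U)
    (p : ℕ) (ξ : Form n) (hξ : IsPForm U p ξ) :
    ∀ (a : ℕ → Fin n), ∀ x ∈ U,
      iprod (p + 1) v (extd p ξ) a x + extd (p - 1) (iprod p v ξ) a x
        = (∑ j, fmul (v j) (nabla Γ j p ξ)) a x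
          + (∑ i, ∑ k,
              fmul
                (fun y => (pd i (v k) y + ∑ m, Γ k i m y * v m y)
                  + ∑ j, v j y * Tor Γ k j i y)
                (wedge 1 (p - 1) (dxF i) (intr p k ξ))) a x := by
  intro a x hx
  cases p with
  | zero =>
    have hz : ∀ b : ℕ → Fin n, (fun t => if t < 0 then b t else b (t + 1)) = fun t => b (t + 1) :=
      fun b => by funext t; simp
    simp [iprod, extd, intr, nabla, wedge, fmul, pd, Finset.sum_apply]
  | succ q =>
    have hL := lie_coord hU v hvs q ξ hξ a x hx
    rw [Nat.add_sub_cancel, hL]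
    simp only [Finset.sum_apply, fmul, wedge_dx hξ.1 hξ.2.1, nabla]
    have hR : ∀ c : Fin n → Fin n → ℝ,
        ∑ i, ∑ k, c i k * ∑ j : Fin (q + 1), (if a (j : ℕ) = i then (1 : ℝ) else 0)
          * ξ (fun t => if t = (j : ℕ) then k else a t) x
        = ∑ j : Fin (q + 1), ∑ k, c (a (j : ℕ)) k
          * ξ (fun t => if t = (j : ℕ) then k else a t) x := by
      intro c
      simp only [Finset.mul_sum]
      rw [Finset.sum_comm]
      rw [Finset.sum_comm (s := (Finset.univ : Finset (Fin (q + 1))))]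
      refine Finset.sum_congr rfl fun k _ => ?_
      rw [Finset.sum_comm]
      refine Finset.sum_congr rfl fun j _ => ?_
      rw [Finset.sum_eq_single (a (j : ℕ))]
      · simp
      · intro b _ hb
        simp [hb.symm]
      · simp
    rw [hR]
    have hN : ∑ j, v j x * (pd j (ξ a) x - ∑ k : Fin (q + 1), ∑ m, Γ m j (a (k : ℕ)) x
          * ξ (fun t => if t = (k : ℕ) then m else a t) x)
        = ∑ j, v j x * pd j (ξ a) x - ∑ k : Fin (q + 1), ∑ m,
          (∑ j, v j x * Γ m j (a (k : ℕ)) x)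
            * ξ (fun t => if t = (k : ℕ) then m else a t) x := by
      simp only [mul_sub, Finset.sum_sub_distrib, Finset.mul_sum, Finset.sum_mul]
      congr 1
      rw [Finset.sum_comm]
      refine Finset.sum_congr rfl fun k _ => ?_
      rw [Finset.sum_comm]
      refine Finset.sum_congr rfl fun m _ => Finset.sum_congr rfl fun j _ => ?_
      ring
    rw [hN, sub_add, ← sub_neg_eq_add]
    congr 1
    rw [← Finset.sum_sub_distrib, ← Finset.sum_neg_distrib]
    refine Finset.sum_congr rfl fun k _ => ?_
    rw [← Finset.sum_sub_distrib, ← Finset.sum_neg_distrib]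
    refine Finset.sum_congr rfl fun m _ => ?_
    simp only [Tor, mul_sub, Finset.sum_sub_distrib]
    have hc : ∑ j, Γ m (a (k : ℕ)) j x * v j x = ∑ j, v j x * Γ m (a (k : ℕ)) j x :=
      Finset.sum_congr rfl fun j _ => mul_comm _ _
    rw [hc]
    ring

end Stmt13
end
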